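/- arXiv:2605.04529 — 4 statements merged into one kernel-verified Lean document; each statement's English description precedes it below -/
import Mathlib

section
/- Let 𝒜 be an abelian category and let 𝒜₀ ⊆ 𝒜 be a full abelian subcategory which is almost hereditary in 𝒜. Let E and F be objects of D^b(𝒜) all of whose cohomology objects H^i(E) and H^i(F) lie in 𝒜₀. If Hom^n(E, F) = 0 for every integer n ≤ 0, then: (1) Hom^p(H^i(E), H^{i−n}(F)) = 0 for all integers i and p and every integer n ≥ 1; and (2) Hom^0(H^i(E), H^i(F)) = 0 for every integer i. -/
open CategoryTheory Limits DerivedCategory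

universe w v u

noncomputable section

variable (𝒜 : Type u) [Category.{v} 𝒜] [Abelian 𝒜] [HasDerivedCategory.{w} 𝒜]

/-- The object of the derived category associated with an object of the abelian
category, placed in degree `0`. -/
abbrev degZero (A : 𝒜) : DerivedCategory 𝒜 := (DerivedCategory.singleFunctor 𝒜 0).obj A

/-- An object of the derived category is bounded (i.e. belongs to `D^b(𝒜)`) if only
finitely many of its cohomology objects are nonzero. -/
def IsBoundedComplex (E : DerivedCategory 𝒜) : Prop :=
  ∃ a b : ℤ, ∀ i : ℤ, (i < a ∨ b < i) →
    IsZero ((DerivedCategory.homologyFunctor 𝒜 i).obj E)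

/-- A collection of objects `A₀` of `𝒜` is a (strictly) full abelian subcategory if it
contains the zero objects and is closed under isomorphisms, kernels, cokernels and
finite biproducts. -/
def IsAbelianSubcategory (A₀ : Set 𝒜) : Prop :=
  (∀ X : 𝒜, IsZero X → X ∈ A₀) ∧
  (∀ X Y : 𝒜, X ∈ A₀ → Nonempty (X ≅ Y) → Y ∈ A₀) ∧
  (∀ (X Y : 𝒜) (f : X ⟶ Y), X ∈ A₀ → Y ∈ A₀ → kernel f ∈ A₀ ∧ cokernel f ∈ A₀) ∧
  (∀ X Y : 𝒜, X ∈ A₀ → Y ∈ A₀ → (X ⊞ Y) ∈ A₀)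

/-- `A₀` is almost hereditary in `𝒜`: for objects `E`, `F` of `A₀`, the vanishing of
`Hom^0(E,F)` and `Hom^1(E,F)` (computed in the derived category) implies the vanishing
of `Hom^p(E,F)` for all `p ∈ ℤ`. -/
def AlmostHereditary (A₀ : Set 𝒜) : Prop :=
  ∀ (A B : 𝒜), A ∈ A₀ → B ∈ A₀ →
    (∀ f : degZero 𝒜 A ⟶ degZero 𝒜 B, f = 0) →
    (∀ f : degZero 𝒜 A ⟶ (degZero 𝒜 B)⟦(1 : ℤ)⟧, f = 0) →
    ∀ (p : ℤ) (f : degZero 𝒜 A ⟶ (degZero 𝒜 B)⟦p⟧), f = 0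

end


section Helpers

open Pretriangulated Triangulated

variable {C : Type u} [Category.{v} C] [Abelian C] [HasDerivedCategory.{w} C]

/-- All morphisms from `X` to `Y` vanish. -/
def HomVanish (X Y : DerivedCategory C) : Prop := ∀ f : X ⟶ Y, f = 0

/-- All morphisms from `X` to all shifts of `Y` vanish. -/
def AllZero (X Y : DerivedCategory C) : Prop := ∀ n : ℤ, HomVanish X (Y⟦n⟧)

lemma HomVanish.of_iso {X Y X' Y' : DerivedCategory C} (h : HomVanish X Y)
    (e : X ≅ X') (e' : Y ≅ Y') : HomVanish X' Y' := by
  intro f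
  have := h (e.hom ≫ f ≫ e'.inv)
  rw [← cancel_epi e.hom, ← cancel_mono e'.inv]
  simpa using this

lemma HomVanish.shift {X Y : DerivedCategory C} (h : HomVanish X Y) (n : ℤ) :
    HomVanish (X⟦n⟧) (Y⟦n⟧) := by
  intro f
  obtain ⟨g, rfl⟩ := (shiftFunctor (DerivedCategory C) n).map_surjective f
  rw [h g, Functor.map_zero]

lemma AllZero.of_iso {X Y X' Y' : DerivedCategory C} (h : AllZero X Y)
    (e : X ≅ X') (e' : Y ≅ Y') : AllZero X' Y' :=
  fun n => (h n).of_iso e ((shiftFunctor _ n).mapIso e')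

lemma AllZero.zero {X Y : DerivedCategory C} (h : AllZero X Y) : HomVanish X Y :=
  (h 0).of_iso (Iso.refl _) ((shiftFunctorZero _ ℤ).app Y)

lemma AllZero.shift_right {X Y : DerivedCategory C} (h : AllZero X Y) (m : ℤ) :
    AllZero X (Y⟦m⟧) :=
  fun n => (h (m + n)).of_iso (Iso.refl _) ((shiftFunctorAdd _ m n).app Y)

lemma AllZero.shift_left {X Y : DerivedCategory C} (h : AllZero X Y) (m : ℤ) :
    AllZero (X⟦m⟧) Y :=
  fun n => ((h (n - m)).shift m).of_iso (Iso.refl _)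
    ((shiftFunctorAdd' _ (n - m) m n (by lia)).symm.app Y)

lemma AllZero.of_triangle_left {T : Triangle (DerivedCategory C)} (hT : T ∈ distTriang _)
    {Y : DerivedCategory C} (h₁ : AllZero T.obj₁ Y) (h₃ : AllZero T.obj₃ Y) :
    AllZero T.obj₂ Y := by
  intro n f
  obtain ⟨g, rfl⟩ := Triangle.yoneda_exact₂ _ hT f (h₁ n _)
  rw [h₃ n g, comp_zero]

lemma AllZero.of_triangle_right {T : Triangle (DerivedCategory C)} (hT : T ∈ distTriang _)
    {X : DerivedCategory C} (h₁ : AllZero X T.obj₁) (h₃ : AllZero X T.obj₃) :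
    AllZero X T.obj₂ := by
  intro n f
  obtain ⟨g, hg⟩ := Triangle.coyoneda_exact₂ _ (Triangle.shift_distinguished T hT n) f (h₃ n _)
  have hg0 : g = 0 := h₁ n g
  exact hg.trans (by rw [hg0]; exact zero_comp)

lemma AllZero.of_isZero_left {X Y : DerivedCategory C} (h : IsZero X) : AllZero X Y :=
  fun _ _ => h.eq_of_src _ _

lemma AllZero.of_isZero_right {X Y : DerivedCategory C} (h : IsZero Y) : AllZero X Y :=
  fun n _ => (Functor.map_isZero (shiftFunctor _ n) h).eq_of_tgt _ _

/-- The single complexes in degree `n` and `0` agree up to shift. -/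
noncomputable def singleShift (A : C) (n : ℤ) :
    ((singleFunctor C n).obj A)⟦n⟧ ≅ (singleFunctor C 0).obj A :=
  ((singleFunctors C).shiftIso n 0 n (by lia)).app A

/-- The inverse shift. -/
noncomputable def singleShift' (A : C) (n : ℤ) :
    ((singleFunctor C 0).obj A)⟦-n⟧ ≅ (singleFunctor C n).obj A :=
  ((singleFunctors C).shiftIso (-n) n 0 (by lia)).app A

/-- An object concentrated in one degree is a single complex. -/
lemma exists_iso_single (X : DerivedCategory C) (n : ℤ) (h₁ : X.IsGE n) (h₂ : X.IsLE n) :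
    Nonempty ((singleFunctor C n).obj ((homologyFunctor C n).obj X) ≅ X) := by
  obtain ⟨Y, ⟨e⟩⟩ := exists_iso_singleFunctor_obj_of_isGE_of_isLE X n
  exact ⟨(singleFunctor C n).mapIso ((homologyFunctor C n).mapIso e ≪≫
    (singleFunctorCompHomologyFunctorIso C n).app Y) ≪≫ e.symm⟩

lemma exists_trunc (X : DerivedCategory C) (n : ℤ) :
    ∃ (L R : DerivedCategory C) (f : L ⟶ X) (g : X ⟶ R) (h : R ⟶ L⟦(1 : ℤ)⟧),
      Triangle.mk f g h ∈ distTriang _ ∧ L.IsLE (n - 1) ∧ R.IsGE n ∧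
      (∀ a, a < n → Nonempty ((homologyFunctor C a).obj X ≅ (homologyFunctor C a).obj L)) ∧
      (∀ a, n ≤ a → Nonempty ((homologyFunctor C a).obj X ≅ (homologyFunctor C a).obj R)) := by
  obtain ⟨L, R, hL, hR, f, g, h, hT⟩ :=
    TStructure.t.exists_triangle X (n - 1) n (by lia)
  have hL' : L.IsLE (n - 1) := ⟨hL⟩
  have hR' : R.IsGE n := ⟨hR⟩
  refine ⟨L, R, f, g, h, hT, hL', hR', fun a ha => ?_, fun a ha => ?_⟩
  · have : Mono ((homologyFunctor C a).map f) :=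
      (HomologySequence.mono_homologyMap_mor₁_iff _ hT (a - 1) a (by lia)).2
        ((isZero_of_isGE R n (a - 1) (by lia)).eq_of_src _ _)
    have : Epi ((homologyFunctor C a).map f) :=
      (HomologySequence.epi_homologyMap_mor₁_iff _ hT a).2
        ((isZero_of_isGE R n a (by lia)).eq_of_tgt _ _)
    have := isIso_of_mono_of_epi ((homologyFunctor C a).map f)
    exact ⟨(asIso ((homologyFunctor C a).map f)).symm⟩
  · have : Mono ((homologyFunctor C a).map g) :=
      (HomologySequence.mono_homologyMap_mor₂_iff _ hT a).2
        ((isZero_of_isLE L (n - 1) a (by lia)).eq_of_src _ _)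
    have : Epi ((homologyFunctor C a).map g) :=
      (HomologySequence.epi_homologyMap_mor₂_iff _ hT a (a + 1) (by lia)).2
        ((isZero_of_isLE L (n - 1) (a + 1) (by lia)).eq_of_tgt _ _)
    have := isIso_of_mono_of_epi ((homologyFunctor C a).map g)
    exact ⟨asIso ((homologyFunctor C a).map g)⟩

lemma allZero_left_aux (Y : DerivedCategory C) (lo : ℤ) (N : ℕ) :
    ∀ X : DerivedCategory C, X.IsGE lo → X.IsLE (lo + N - 1) →
      (∀ a, AllZero (degZero C ((homologyFunctor C a).obj X)) Y) → AllZero X Y := by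
  induction N with
  | zero =>
    intro X h₁ h₂ _
    exact AllZero.of_isZero_left (TStructure.t.isZero X (lo + (0 : ℕ) - 1) lo (by simp))
  | succ N ih =>
    intro X h₁ h₂ hX
    obtain ⟨L, R, f, g, h, hT, hL, hR, eL, eR⟩ := exists_trunc X (lo + N)
    refine AllZero.of_triangle_left hT (ih L ?_ hL ?_) ?_
    · rw [isGE_iff]
      intro a ha
      obtain ⟨e⟩ := eL a (by lia)
      exact (isZero_of_isGE X lo a ha).of_iso e.symm
    · intro a
      by_cases ha : a < lo + N
      · obtain ⟨e⟩ := eL a ha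
        exact (hX a).of_iso ((singleFunctor C 0).mapIso e) (Iso.refl _)
      · exact AllZero.of_isZero_left (Functor.map_isZero _
          (isZero_of_isLE L (lo + N - 1) a (by lia)))
    · have : R.IsLE (lo + N) := by
        rw [isLE_iff]
        intro a ha
        obtain ⟨e⟩ := eR a (by lia)
        exact (isZero_of_isLE X (lo + (N + 1 : ℕ) - 1) a (by push_cast; lia)).of_iso e.symm
      obtain ⟨e⟩ := exists_iso_single R (lo + N) hR this
      obtain ⟨e'⟩ := eR (lo + N) (by lia)
      exact ((hX _).shift_left (-(lo + N))).of_iso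
        (singleShift' _ _ ≪≫ (singleFunctor C _).mapIso e' ≪≫ e) (Iso.refl _)

lemma allZero_right_aux (Y : DerivedCategory C) (lo : ℤ) (N : ℕ) :
    ∀ X : DerivedCategory C, X.IsGE lo → X.IsLE (lo + N - 1) →
      (∀ a, AllZero Y (degZero C ((homologyFunctor C a).obj X))) → AllZero Y X := by
  induction N with
  | zero =>
    intro X h₁ h₂ _
    exact AllZero.of_isZero_right (TStructure.t.isZero X (lo + (0 : ℕ) - 1) lo (by simp))
  | succ N ih =>
    intro X h₁ h₂ hX
    obtain ⟨L, R, f, g, h, hT, hL, hR, eL, eR⟩ := exists_trunc X (lo + N)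
    refine AllZero.of_triangle_right hT (ih L ?_ hL ?_) ?_
    · rw [isGE_iff]
      intro a ha
      obtain ⟨e⟩ := eL a (by lia)
      exact (isZero_of_isGE X lo a ha).of_iso e.symm
    · intro a
      by_cases ha : a < lo + N
      · obtain ⟨e⟩ := eL a ha
        exact (hX a).of_iso (Iso.refl _) ((singleFunctor C 0).mapIso e)
      · exact AllZero.of_isZero_right (Functor.map_isZero _
          (isZero_of_isLE L (lo + N - 1) a (by lia)))
    · have : R.IsLE (lo + N) := by
        rw [isLE_iff]
        intro a ha
        obtain ⟨e⟩ := eR a (by lia)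
        exact (isZero_of_isLE X (lo + (N + 1 : ℕ) - 1) a (by push_cast; lia)).of_iso e.symm
      obtain ⟨e⟩ := exists_iso_single R (lo + N) hR this
      obtain ⟨e'⟩ := eR (lo + N) (by lia)
      exact ((hX _).shift_right (-(lo + N))).of_iso (Iso.refl _)
        (singleShift' _ _ ≪≫ (singleFunctor C _).mapIso e' ≪≫ e)

lemma IsBoundedComplex.exists_range {X : DerivedCategory C} (h : IsBoundedComplex C X) :
    ∃ (lo : ℤ) (N : ℕ), X.IsGE lo ∧ X.IsLE (lo + N - 1) := by
  obtain ⟨a, b, h⟩ := h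
  refine ⟨a, (b - a + 1).toNat, ?_, ?_⟩
  · rw [isGE_iff]
    exact fun i hi => h i (Or.inl hi)
  · rw [isLE_iff]
    intro i hi
    exact h i (by lia)

lemma AllZero.of_homology {X Y : DerivedCategory C} (hX : IsBoundedComplex C X)
    (hY : IsBoundedComplex C Y)
    (h : ∀ a b, AllZero (degZero C ((homologyFunctor C a).obj X))
      (degZero C ((homologyFunctor C b).obj Y))) : AllZero X Y := by
  obtain ⟨lo, N, h₁, h₂⟩ := hX.exists_range
  obtain ⟨lo', N', h₁', h₂'⟩ := hY.exists_range
  exact allZero_left_aux Y lo N X h₁ h₂ fun a => allZero_right_aux _ lo' N' Y h₁' h₂' (h a)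

/-- Truncation with all the information needed. -/
lemma exists_trunc' (X : DerivedCategory C) (hX : IsBoundedComplex C X) (n : ℤ) :
    ∃ (K R L S : DerivedCategory C) (f : K ⟶ X) (g : X ⟶ R) (h : R ⟶ K⟦(1 : ℤ)⟧)
      (f' : L ⟶ K) (g' : K ⟶ S) (h' : S ⟶ L⟦(1 : ℤ)⟧),
      Triangle.mk f g h ∈ distTriang _ ∧ Triangle.mk f' g' h' ∈ distTriang _ ∧
      K.IsLE n ∧ R.IsGE (n + 1) ∧ L.IsLE (n - 1) ∧ S.IsGE n ∧
      Nonempty ((singleFunctor C n).obj ((homologyFunctor C n).obj X) ≅ S) ∧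
      IsBoundedComplex C R ∧ IsBoundedComplex C L ∧ IsBoundedComplex C S ∧
      (∀ a, n < a → Nonempty ((homologyFunctor C a).obj X ≅ (homologyFunctor C a).obj R)) ∧
      (∀ a, a < n → Nonempty ((homologyFunctor C a).obj X ≅ (homologyFunctor C a).obj L)) ∧
      Nonempty ((homologyFunctor C n).obj X ≅ (homologyFunctor C n).obj S) ∧
      S.IsLE n := by
  obtain ⟨K, R, f, g, h, hT, hK, hR, eK, eR⟩ := exists_trunc X (n + 1)
  obtain ⟨L, S, f', g', h', hT', hL, hS, eL, eS⟩ := exists_trunc K n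
  have hK' : K.IsLE n := by simpa using hK
  have hS' : S.IsLE n := by
    rw [isLE_iff]
    intro a ha
    obtain ⟨e⟩ := eS a ha.le
    exact (isZero_of_isLE K n a ha).of_iso e.symm
  obtain ⟨e₁⟩ := eK n (by lia)
  obtain ⟨e₂⟩ := eS n le_rfl
  obtain ⟨e₃⟩ := exists_iso_single S n hS hS'
  obtain ⟨lo, hi, hb⟩ := hX
  have eL' : ∀ a, a < n → Nonempty ((homologyFunctor C a).obj X ≅ (homologyFunctor C a).obj L) := by
    intro a ha
    obtain ⟨e⟩ := eL a ha
    obtain ⟨e'⟩ := eK a (by lia)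
    exact ⟨e' ≪≫ e⟩
  refine ⟨K, R, L, S, f, g, h, f', g', h', hT, hT', hK', hR, hL, hS,
    ⟨(singleFunctor C n).mapIso (e₁ ≪≫ e₂) ≪≫ e₃⟩, ⟨lo, hi, ?_⟩, ⟨lo, hi, ?_⟩,
    ⟨n, n, ?_⟩, fun a ha => eR a (by lia), eL', ⟨e₁ ≪≫ e₂⟩, hS'⟩
  · intro a ha
    by_cases h : n < a
    · obtain ⟨e⟩ := eR a (by lia)
      exact (hb a ha).of_iso e.symm
    · exact isZero_of_isGE R (n + 1) a (by lia)
  · intro a ha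
    by_cases h : a < n
    · obtain ⟨e⟩ := eL' a h
      exact (hb a ha).of_iso e.symm
    · exact isZero_of_isLE L (n - 1) a (by lia)
  · rintro a (ha | ha)
    · exact isZero_of_isGE S n a ha
    · exact isZero_of_isLE S n a ha

/-- Vanishing of maps between homology objects deduced from vanishing of maps between
complexes and vanishing for all the other relevant pairs of degrees. -/
lemma keyLemma (E G : DerivedCategory C) (hE : IsBoundedComplex C E)
    (hG : IsBoundedComplex C G) (i k : ℤ) (hik : i ≤ k + 1) (h0 : HomVanish E G)
    (hV : ∀ a b, i ≤ a → b ≤ k → (a ≠ i ∨ b ≠ k) →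
      AllZero (degZero C ((homologyFunctor C a).obj E))
        (degZero C ((homologyFunctor C b).obj G))) :
    HomVanish ((singleFunctor C i).obj ((homologyFunctor C i).obj E))
      ((singleFunctor C k).obj ((homologyFunctor C k).obj G)) := by
  obtain ⟨T, E₂, L, S, ι, ρ, δ, l, s, d, hT, hT', hTle, hE₂, hL, hS, ⟨eS⟩, bE₂, -, bS, iE₂, -,
    ⟨iS⟩, hS'⟩ := exists_trunc' E hE i
  obtain ⟨K, G₂, M, R, κ, ρ', δ', m, r, d', hU, hU', hKle, hG₂, hM, hR, ⟨eR⟩, -, bM, bR, -, iM,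
    ⟨iR⟩, hR'⟩ := exists_trunc' G hG k
  obtain ⟨E₁, π, δ₁, hE₁⟩ := distinguished_cocone_triangle (l ≫ ι)
  let o := someOctahedron rfl hT' hT hE₁
  have v₁ : AllZero E₂ R := by
    refine AllZero.of_homology bE₂ bR fun a b => ?_
    by_cases ha : i < a
    · by_cases hb : b = k
      · subst hb
        obtain ⟨e⟩ := iE₂ a ha
        exact (hV a b ha.le le_rfl (Or.inl ha.ne')).of_iso ((singleFunctor C 0).mapIso e)
          ((singleFunctor C 0).mapIso iR)
      · refine AllZero.of_isZero_right (Functor.map_isZero _ ?_)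
        by_cases hb' : b < k
        · exact isZero_of_isGE R k b hb'
        · exact isZero_of_isLE R k b (by lia)
    · exact AllZero.of_isZero_left (Functor.map_isZero _
        (isZero_of_isGE E₂ (i + 1) a (by lia)))
  have v₂ : AllZero E₂ M := by
    refine AllZero.of_homology bE₂ bM fun a b => ?_
    by_cases ha : i < a
    · by_cases hb : b < k
      · obtain ⟨e⟩ := iE₂ a ha
        obtain ⟨e'⟩ := iM b hb
        exact (hV a b ha.le hb.le (Or.inl ha.ne')).of_iso ((singleFunctor C 0).mapIso e)
          ((singleFunctor C 0).mapIso e')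
      · exact AllZero.of_isZero_right (Functor.map_isZero _
          (isZero_of_isLE M (k - 1) b (by lia)))
    · exact AllZero.of_isZero_left (Functor.map_isZero _
        (isZero_of_isGE E₂ (i + 1) a (by lia)))
  have v₃ : AllZero S M := by
    refine AllZero.of_homology bS bM fun a b => ?_
    by_cases ha : a = i
    · subst ha
      by_cases hb : b < k
      · obtain ⟨e'⟩ := iM b hb
        exact (hV a b le_rfl hb.le (Or.inr hb.ne)).of_iso ((singleFunctor C 0).mapIso iS)
          ((singleFunctor C 0).mapIso e')
      · exact AllZero.of_isZero_right (Functor.map_isZero _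
          (isZero_of_isLE M (k - 1) b (by lia)))
    · refine AllZero.of_isZero_left (Functor.map_isZero _ ?_)
      by_cases ha' : a < i
      · exact isZero_of_isGE S i a ha'
      · exact isZero_of_isLE S i a (by lia)
  have v₄ : AllZero E₁ M := AllZero.of_triangle_left o.mem v₃ v₂
  refine HomVanish.of_iso (X := S) (Y := R) ?_ eS.symm eR.symm
  intro f
  obtain ⟨g, hg⟩ : ∃ g : E₁ ⟶ R, f = o.m₁ ≫ g :=
    Triangle.yoneda_exact₂ _ (inv_rot_of_distTriang _ o.mem) f
      ((v₁.shift_left (-1)).zero _)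
  obtain ⟨h, hh⟩ : ∃ h : E₁ ⟶ K, g = h ≫ r :=
    Triangle.coyoneda_exact₃ _ hU' g (v₄ 1 _)
  have z₁ : (ι ≫ π ≫ h) ≫ κ = 0 := by
    have := h0 (π ≫ h ≫ κ)
    simp only [Category.assoc, this, comp_zero]
  have z₂ : ι ≫ π ≫ h = 0 := by
    obtain ⟨y, hy⟩ := Triangle.coyoneda_exact₂ _ (inv_rot_of_distTriang _ hU) (ι ≫ π ≫ h) z₁
    have : (G₂⟦(-1 : ℤ)⟧).IsGE (k + 2) := TStructure.t.isGE_shift G₂ (k + 1) (-1) (k + 2)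
    have : y = 0 := TStructure.t.zero_of_isLE_of_isGE y i (k + 2) (by lia) hTle this
    exact hy.trans (by rw [this]; exact zero_comp)
  have z₃ : s ≫ f = 0 := by
    rw [hg, hh, ← Category.assoc, o.comm₁]
    have := z₂ =≫ r
    simpa using this
  obtain ⟨y, hy⟩ : ∃ y : L⟦(1 : ℤ)⟧ ⟶ R, f = d ≫ y := Triangle.yoneda_exact₃ _ hT' f z₃
  have : (L⟦(1 : ℤ)⟧).IsLE (i - 2) := TStructure.t.isLE_shift L (i - 1) 1 (i - 2)
  have : y = 0 := TStructure.t.zero_of_isLE_of_isGE y (i - 2) k (by lia) this hR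
  rw [hy, this, comp_zero]

/-- Homology of a shift. -/
noncomputable def homologyShift (F : DerivedCategory C) (m a b : ℤ) (h : m + a = b) :
    (homologyFunctor C a).obj (F⟦m⟧) ≅ (homologyFunctor C b).obj F :=
  ((homologyFunctor C 0).shiftIso m a b h).app F

lemma IsBoundedComplex.shift {X : DerivedCategory C} (h : IsBoundedComplex C X) (m : ℤ) :
    IsBoundedComplex C (X⟦m⟧) := by
  obtain ⟨a, b, h⟩ := h
  exact ⟨a - m, b - m, fun i hi => (h (m + i) (by lia)).of_iso (homologyShift X m i _ rfl)⟩

lemma stepLemma (E F : DerivedCategory C) (hE : IsBoundedComplex C E)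
    (hF : IsBoundedComplex C F) (q p : ℤ) (hp : p ≤ 1)
    (h0 : HomVanish E (F⟦p + q⟧))
    (hV : ∀ a b, b - a < q → AllZero (degZero C ((homologyFunctor C a).obj E))
        (degZero C ((homologyFunctor C b).obj F))) (i j : ℤ) (hij : i + q = j) :
    HomVanish (degZero C ((homologyFunctor C i).obj E))
      ((degZero C ((homologyFunctor C j).obj F))⟦p⟧) := by
  have key := keyLemma E (F⟦p + q⟧) hE (hF.shift _) i (i - p) (by lia) h0 (by
    intro a b ha hb hab
    exact (hV a (p + q + b) (by lia)).of_iso (Iso.refl _)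
      ((singleFunctor C 0).mapIso (homologyShift F (p + q) b _ rfl).symm))
  refine (key.shift i).of_iso (singleShift _ _) ?_
  exact (shiftFunctorAdd' _ (i - p) p i (by lia)).app _ ≪≫
    (shiftFunctor _ p).mapIso (singleShift _ _ ≪≫
      (singleFunctor C 0).mapIso (homologyShift F (p + q) (i - p) j (by lia)))

end Helpers

theorem stmt1 {𝒜 : Type u} [Category.{v} 𝒜] [Abelian 𝒜] [HasDerivedCategory.{w} 𝒜]
    (A₀ : Set 𝒜) (hA₀ : IsAbelianSubcategory 𝒜 A₀) (hAH : AlmostHereditary 𝒜 A₀)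
    (E F : DerivedCategory 𝒜)
    (hEbdd : IsBoundedComplex 𝒜 E) (hFbdd : IsBoundedComplex 𝒜 F)
    (hE : ∀ i : ℤ, (DerivedCategory.homologyFunctor 𝒜 i).obj E ∈ A₀)
    (hF : ∀ i : ℤ, (DerivedCategory.homologyFunctor 𝒜 i).obj F ∈ A₀)
    (hvan : ∀ n : ℤ, n ≤ 0 → ∀ f : E ⟶ F⟦n⟧, f = 0) :
    (∀ (i p n : ℤ), 1 ≤ n →
      ∀ f : degZero 𝒜 ((DerivedCategory.homologyFunctor 𝒜 i).obj E) ⟶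
        (degZero 𝒜 ((DerivedCategory.homologyFunctor 𝒜 (i - n)).obj F))⟦p⟧, f = 0) ∧
    (∀ i : ℤ,
      ∀ f : degZero 𝒜 ((DerivedCategory.homologyFunctor 𝒜 i).obj E) ⟶
        degZero 𝒜 ((DerivedCategory.homologyFunctor 𝒜 i).obj F), f = 0) := by
  have main : ∀ a b : ℤ, b - a < 0 →
      AllZero (degZero 𝒜 ((DerivedCategory.homologyFunctor 𝒜 a).obj E))
        (degZero 𝒜 ((DerivedCategory.homologyFunctor 𝒜 b).obj F)) := by
    obtain ⟨a₀, b₀, hEb⟩ := id hEbdd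
    obtain ⟨c₀, d₀, hFb⟩ := id hFbdd
    have ind : ∀ (N : ℕ) (a b : ℤ), b - a < 0 → b - a < c₀ - b₀ + N →
        AllZero (degZero 𝒜 ((DerivedCategory.homologyFunctor 𝒜 a).obj E))
          (degZero 𝒜 ((DerivedCategory.homologyFunctor 𝒜 b).obj F)) := by
      intro N
      induction N with
      | zero =>
        intro a b _ h
        by_cases ha : b₀ < a
        · exact AllZero.of_isZero_left (Functor.map_isZero _ (hEb a (Or.inr ha)))
        · exact AllZero.of_isZero_right (Functor.map_isZero _ (hFb b (Or.inl (by
            push_cast at h; lia))))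
      | succ N ih =>
        intro a b hab h
        have step : ∀ p : ℤ, p ≤ 1 → HomVanish (degZero 𝒜 ((homologyFunctor 𝒜 a).obj E))
            ((degZero 𝒜 ((homologyFunctor 𝒜 b).obj F))⟦p⟧) := fun p hp =>
          stepLemma E F hEbdd hFbdd (b - a) p hp (hvan _ (by lia))
            (fun a' b' h' => ih a' b' (by lia) (by push_cast at h; lia)) a b (by lia)
        exact hAH _ _ (hE a) (hF b)
          ((step 0 (by lia)).of_iso (Iso.refl _) ((shiftFunctorZero _ ℤ).app _)) (step 1 le_rfl)
    intro a b hab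
    exact ind (b₀ - c₀).toNat a b hab (by lia)
  refine ⟨fun i p n hn => main i (i - n) (by lia) p, fun i => ?_⟩
  exact (stepLemma E F hEbdd hFbdd 0 0 (by lia) (hvan _ (by lia)) main i i (by lia)).of_iso
    (Iso.refl _) ((shiftFunctorZero _ ℤ).app _)
end

section
/- Let 𝒜 be an abelian category and let 𝒜₀ ⊆ 𝒜 be a full abelian subcategory which is almost hereditary in 𝒜. Let E be a nonzero object of D^b(𝒜) all of whose cohomology objects lie in 𝒜₀, and set m₀ = max{ i ∈ ℤ : H^i(E) ≠ 0 }. If Hom^n(E, E) = 0 for all integers n < 0 and Hom^1(H^{m₀}(E), H^{m₀−1}(E)) ≠ 0, then there exists a nonzero morphism ψ : E → E in D^b(𝒜) with ψ ∘ ψ = 0. -/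
open CategoryTheory Limits DerivedCategory

universe w v u

open Pretriangulated Triangulated

set_option linter.unusedSectionVars false

section Aux

variable {C : Type*} [Category C] [Preadditive C] [HasZeroObject C] [HasShift C ℤ]
  [∀ n : ℤ, (CategoryTheory.shiftFunctor C n).Additive]

/-- All morphisms from the shift `X⟦p⟧` to `Y` vanish. -/
def HomVan (X Y : C) (p : ℤ) : Prop := ∀ f : X⟦p⟧ ⟶ Y, f = 0

lemma homVan_of_iso {X Y X' Y' : C} {p : ℤ} (e : X ≅ X') (e' : Y ≅ Y') (h : HomVan X Y p) :
    HomVan X' Y' p := by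
  intro f
  have := h ((shiftFunctor C p).map e.hom ≫ f ≫ e'.inv)
  rw [← cancel_epi ((shiftFunctor C p).map e.hom), ← cancel_mono e'.inv]
  simpa using this

lemma homVan_shift_tgt {X Y : C} (p q n : ℤ) (hn : q + n = p) (h : HomVan X Y q) :
    HomVan X (Y⟦n⟧) p := by
  intro f
  obtain ⟨g, hg⟩ := (shiftFunctor C n).map_surjective
    ((shiftFunctorAdd' C q n p hn).inv.app X ≫ f)
  rw [h g, Functor.map_zero] at hg
  rw [← cancel_epi ((shiftFunctorAdd' C q n p hn).inv.app X), ← hg, comp_zero]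

lemma homVan_of_shift_tgt {X Y : C} (p q n : ℤ) (hn : q + n = p) (h : HomVan X (Y⟦n⟧) p) :
    HomVan X Y q := by
  intro f
  apply (shiftFunctor C n).map_injective
  have := h ((shiftFunctorAdd' C q n p hn).hom.app X ≫ (shiftFunctor C n).map f)
  rw [← cancel_epi ((shiftFunctorAdd' C q n p hn).hom.app X), this, Functor.map_zero, comp_zero]

lemma homVan_shift_src {X Y : C} (p q n : ℤ) (hn : n + q = p) (h : HomVan X Y p) :
    HomVan (X⟦n⟧) Y q := by
  intro f
  have := h ((shiftFunctorAdd' C n q p hn).hom.app X ≫ f)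
  rw [← cancel_epi ((shiftFunctorAdd' C n q p hn).hom.app X), this, comp_zero]

lemma homVan_of_shift_src {X Y : C} (p q n : ℤ) (hn : n + q = p) (h : HomVan (X⟦n⟧) Y q) :
    HomVan X Y p := by
  intro f
  have := h ((shiftFunctorAdd' C n q p hn).inv.app X ≫ f)
  rw [← cancel_epi ((shiftFunctorAdd' C n q p hn).inv.app X), this, comp_zero]

lemma homVan_zero_iff {X Y : C} : HomVan X Y 0 ↔ ∀ f : X ⟶ Y, f = 0 := by
  constructor
  · intro h f
    have := h ((shiftFunctorZero C ℤ).hom.app X ≫ f)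
    rw [← cancel_epi ((shiftFunctorZero C ℤ).hom.app X), this, comp_zero]
  · intro h f
    have := h ((shiftFunctorZero C ℤ).inv.app X ≫ f)
    rw [← cancel_epi ((shiftFunctorZero C ℤ).inv.app X), this, comp_zero]

/-- comparison with morphisms to shifted targets -/
lemma homVan_iff_tgt {X Y : C} (p q : ℤ) (h : p + q = 0) :
    HomVan X Y p ↔ ∀ f : X ⟶ Y⟦q⟧, f = 0 := by
  rw [← homVan_zero_iff]
  exact ⟨homVan_shift_tgt 0 p q h, homVan_of_shift_tgt 0 p q h⟩

variable [Pretriangulated C]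

lemma core_nonzero {T E H U Q S K : C} {i : T ⟶ E} {π : E ⟶ H} {δ : H ⟶ T⟦(1 : ℤ)⟧}
    (h₁ : Triangle.mk i π δ ∈ distTriang C)
    {ι : U ⟶ E} {ρ : E ⟶ Q} {δ' : Q ⟶ U⟦(1 : ℤ)⟧} (h₂ : Triangle.mk ι ρ δ' ∈ distTriang C)
    {s : S ⟶ U} {k : U ⟶ K} {δ'' : K ⟶ S⟦(1 : ℤ)⟧} (h₃ : Triangle.mk s k δ'' ∈ distTriang C)
    (p : ℤ) (hS : HomVan H S (p - 1)) (hQ : HomVan E Q (p + 1)) (hT : HomVan T K (p + 1))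
    (e : H⟦p⟧ ⟶ K) (he : e ≠ 0) :
    ∃ g : H⟦p⟧ ⟶ U, (shiftFunctor C p).map π ≫ g ≫ ι ≠ 0 := by
  obtain ⟨g, hg⟩ : ∃ g : H⟦p⟧ ⟶ U, e = g ≫ k := Triangle.coyoneda_exact₃ _ h₃ e
    (homVan_shift_tgt p (p - 1) 1 (by lia) hS _)
  refine ⟨g, fun h0 ↦ he ?_⟩
  have h0' : (shiftFunctor C p).map π ≫ g = 0 := by
    have hQ' := homVan_shift_tgt p (p + 1) (-1) (by lia) hQ
    obtain ⟨x, hx⟩ := Triangle.coyoneda_exact₂ _ (inv_rot_of_distTriang _ h₂)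
      ((shiftFunctor C p).map π ≫ g) (by
        change ((shiftFunctor C p).map π ≫ g) ≫ ι = 0
        rw [Category.assoc, h0])
    refine hx.trans ?_
    rw [hQ' x]
    exact zero_comp
  have h0'' : (shiftFunctor C p).map π ≫ e = 0 := by
    rw [hg, reassoc_of% h0', zero_comp]
  obtain ⟨y, hy⟩ := Triangle.yoneda_exact₃ _ (Triangle.shift_distinguished _ h₁ p) e
    (by
      change (p.negOnePow • (shiftFunctor C p).map π) ≫ e = 0
      rw [Linear.units_smul_comp, h0'', smul_zero])
  have hT1 : HomVan (T⟦p⟧) K 1 := homVan_shift_src (p + 1) 1 p rfl hT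
  refine hy.trans ?_
  rw [hT1 y]
  exact comp_zero

lemma exists_square_zero {E H U : C} (π : E ⟶ H) (ι : U ⟶ E) (h : ι ≫ π = 0)
    (g : H⟦(0 : ℤ)⟧ ⟶ U) (hg : (shiftFunctor C (0 : ℤ)).map π ≫ g ≫ ι ≠ 0) :
    ∃ ψ : E ⟶ E, ψ ≠ 0 ∧ ψ ≫ ψ = 0 := by
  have hz : (shiftFunctorZero C ℤ).inv.app E ≫ (shiftFunctor C (0 : ℤ)).map π =
      π ≫ (shiftFunctorZero C ℤ).inv.app H := ((shiftFunctorZero C ℤ).inv.naturality π).symm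
  refine ⟨π ≫ (shiftFunctorZero C ℤ).inv.app H ≫ g ≫ ι, fun h0 ↦ hg ?_, ?_⟩
  · rw [← cancel_epi ((shiftFunctorZero C ℤ).inv.app E), reassoc_of% hz, h0, comp_zero]
  · simp [reassoc_of% h]

lemma homVan_mid {S U K X : C} {s : S ⟶ U} {k : U ⟶ K} {δ'' : K ⟶ S⟦(1 : ℤ)⟧}
    (h₃ : Triangle.mk s k δ'' ∈ distTriang C) (p : ℤ) (hS : HomVan X S p) (hK : HomVan X K p) :
    HomVan X U p := by
  intro f
  obtain ⟨g, hg⟩ := Triangle.coyoneda_exact₂ _ h₃ f (hK _)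
  refine hg.trans ?_
  rw [hS g]
  exact zero_comp

lemma homVan_of_t (t : TStructure C) {X Y : C} (a b p : ℤ) [t.IsLE X a] [t.IsGE Y b]
    (h : a < b + p) : HomVan X Y p := by
  intro f
  have := t.isLE_shift X a p (a - p)
  exact t.zero f (a - p) b (by lia)

end Aux

section Derived

variable {𝒜 : Type u} [Category.{v} 𝒜] [Abelian 𝒜] [HasDerivedCategory.{w} 𝒜]

local notation "tt" => (DerivedCategory.TStructure.t : TStructure (DerivedCategory 𝒜))

lemma isIso_homology_truncGE (X : DerivedCategory 𝒜) (j : ℤ) :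
    IsIso ((homologyFunctor 𝒜 j).map (((tt).truncGEπ j).app X)) := by
  have hT := (tt).triangleLTGE_distinguished j X
  have hz : ∀ i, j ≤ i → IsZero ((homologyFunctor 𝒜 i).obj (((tt).truncLT j).obj X)) := by
    intro i hi
    have : (((tt).truncLT j).obj X).IsLE (j - 1) := (tt).isLE_truncLT_obj X j (j - 1) (by lia)
    exact isZero_of_isLE _ (j - 1) i (by lia)
  have h1 : Mono ((homologyFunctor 𝒜 j).map (((tt).truncGEπ j).app X)) :=
    (HomologySequence.mono_homologyMap_mor₂_iff _ hT j).2 ((hz j le_rfl).eq_of_src _ _)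
  have h2 : Epi ((homologyFunctor 𝒜 j).map (((tt).truncGEπ j).app X)) :=
    (HomologySequence.epi_homologyMap_mor₂_iff _ hT j (j + 1) rfl).2
      ((hz (j + 1) (by lia)).eq_of_tgt _ _)
  exact isIso_of_mono_of_epi _

lemma isIso_homology_truncLT (X : DerivedCategory 𝒜) (j : ℤ) :
    IsIso ((homologyFunctor 𝒜 j).map (((tt).truncLTι (j + 1)).app X)) := by
  have hT := (tt).triangleLTGE_distinguished (j + 1) X
  have hz : ∀ i, i ≤ j → IsZero ((homologyFunctor 𝒜 i).obj (((tt).truncGE (j + 1)).obj X)) := by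
    intro i hi
    have : (((tt).truncGE (j + 1)).obj X).IsGE (j + 1) := (tt).isGE_truncGE_obj X _ _ (by lia)
    exact isZero_of_isGE _ (j + 1) i (by lia)
  have h1 : Epi ((homologyFunctor 𝒜 j).map (((tt).truncLTι (j + 1)).app X)) :=
    (HomologySequence.epi_homologyMap_mor₁_iff _ hT j).2 ((hz j le_rfl).eq_of_tgt _ _)
  have h2 : Mono ((homologyFunctor 𝒜 j).map (((tt).truncLTι (j + 1)).app X)) :=
    (HomologySequence.mono_homologyMap_mor₁_iff _ hT (j - 1) j (by lia)).2
      ((hz (j - 1) (by lia)).eq_of_src _ _)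
  exact isIso_of_mono_of_epi _

/-- An object concentrated in degree `j` is the shift of its cohomology. -/
lemma nonempty_iso_degZero (X : DerivedCategory 𝒜) (j : ℤ) [X.IsGE j] [X.IsLE j] (A : 𝒜)
    (e : (homologyFunctor 𝒜 j).obj X ≅ A) :
    Nonempty (degZero 𝒜 A ≅ X⟦j⟧) := by
  obtain ⟨Y, ⟨e'⟩⟩ := exists_iso_singleFunctor_obj_of_isGE_of_isLE X j
  have e2 : (homologyFunctor 𝒜 j).obj X ≅ Y :=
    (homologyFunctor 𝒜 j).mapIso e' ≪≫ (singleFunctorCompHomologyFunctorIso 𝒜 j).app Y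
  have e3 : ((singleFunctor 𝒜 j).obj Y)⟦j⟧ ≅ degZero 𝒜 Y :=
    ((singleFunctors 𝒜).shiftIso j 0 j (by lia)).app Y
  exact ⟨(singleFunctor 𝒜 0).mapIso (e.symm ≪≫ e2) ≪≫ e3.symm ≪≫
    (shiftFunctor (DerivedCategory 𝒜) j).mapIso e'.symm⟩

lemma nonempty_iso_truncGE (E : DerivedCategory 𝒜) (m : ℤ) [E.IsLE m] :
    Nonempty (degZero 𝒜 ((homologyFunctor 𝒜 m).obj E) ≅ (((tt).truncGE m).obj E)⟦m⟧) := by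
  have := isIso_homology_truncGE E m
  exact nonempty_iso_degZero _ m _ (asIso ((homologyFunctor 𝒜 m).map (((tt).truncGEπ m).app E))).symm

lemma nonempty_iso_K (E : DerivedCategory 𝒜) (j : ℤ) :
    Nonempty (degZero 𝒜 ((homologyFunctor 𝒜 j).obj E) ≅
      (((tt).truncGE j).obj (((tt).truncLT (j + 1)).obj E))⟦j⟧) := by
  have := isIso_homology_truncGE (((tt).truncLT (j + 1)).obj E) j
  have := isIso_homology_truncLT E j
  exact nonempty_iso_degZero _ j _
    ((asIso ((homologyFunctor 𝒜 j).map (((tt).truncGEπ j).app _))).symm ≪≫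
      asIso ((homologyFunctor 𝒜 j).map (((tt).truncLTι (j + 1)).app E)))

/-- Comparison of vanishing between shifted objects and objects in degree zero. -/
lemma homVan_degZero_iff {A B : 𝒜} {H K : DerivedCategory 𝒜} {m j : ℤ}
    (e : degZero 𝒜 A ≅ H⟦m⟧) (e' : degZero 𝒜 B ≅ K⟦j⟧) (p q : ℤ) (h : q + j = m + p) :
    HomVan (degZero 𝒜 A) (degZero 𝒜 B) p ↔ HomVan H K q := by
  constructor
  · intro h'
    exact homVan_of_shift_tgt (m + p) q j h
      (homVan_of_shift_src (m + p) p m rfl (homVan_of_iso e e' h'))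
  · intro h'
    exact homVan_of_iso e.symm e'.symm
      (homVan_shift_src (m + p) p m rfl (homVan_shift_tgt (m + p) q j h h'))

/-- The application of the core lemma to the truncations. -/
lemma core_trunc (E : DerivedCategory 𝒜) (m j p : ℤ) [E.IsLE m] (hj : j < m) (hp : m - j - 1 ≤ p)
    (hS : HomVan (((tt).truncGE m).obj E) (((tt).truncLT j).obj E) (p - 1))
    (hK : ¬ HomVan (((tt).truncGE m).obj E)
      (((tt).truncGE j).obj (((tt).truncLT (j + 1)).obj E)) p) :
    ∃ g : (((tt).truncGE m).obj E)⟦p⟧ ⟶ ((tt).truncLT (j + 1)).obj E,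
      (shiftFunctor _ p).map (((tt).truncGEπ m).app E) ≫ g ≫ ((tt).truncLTι (j + 1)).app E ≠ 0 := by
  have := (tt).isIso_truncLT_map_truncLTι_app j (j + 1) (by lia) E
  have e := asIso (((tt).truncLT j).map (((tt).truncLTι (j + 1)).app E))
  unfold HomVan at hK
  push Not at hK
  obtain ⟨f, hf⟩ := hK
  refine core_nonzero ((tt).triangleLTGE_distinguished m E)
    ((tt).triangleLTGE_distinguished (j + 1) E)
    ((tt).triangleLTGE_distinguished j (((tt).truncLT (j + 1)).obj E)) p ?_ ?_ ?_ f hf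
  · exact homVan_of_iso (Iso.refl _) e.symm hS
  · have : (tt).IsLE E m := inferInstance
    have : (tt).IsGE (((tt).truncGE (j + 1)).obj E) (j + 1) := inferInstance
    exact homVan_of_t (X := E) (tt) m (j + 1) (p + 1) (by lia)
  · exact homVan_of_t (tt) (m - 1) j (p + 1) (by lia)

lemma homVan_step (E : DerivedCategory 𝒜) (m j : ℤ)
    (hS : ∀ p, HomVan (((tt).truncGE m).obj E) (((tt).truncLT j).obj E) p)
    (hK : ∀ p, HomVan (((tt).truncGE m).obj E)
      (((tt).truncGE j).obj (((tt).truncLT (j + 1)).obj E)) p) (p : ℤ) :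
    HomVan (((tt).truncGE m).obj E) (((tt).truncLT (j + 1)).obj E) p := by
  have := (tt).isIso_truncLT_map_truncLTι_app j (j + 1) (by lia) E
  have e := asIso (((tt).truncLT j).map (((tt).truncLTι (j + 1)).app E))
  exact homVan_mid ((tt).triangleLTGE_distinguished j (((tt).truncLT (j + 1)).obj E)) p
    (homVan_of_iso (Iso.refl _) e.symm (hS p)) (hK p)

end Derived

theorem stmt2 {𝒜 : Type u} [Category.{v} 𝒜] [Abelian 𝒜] [HasDerivedCategory.{w} 𝒜]
    (A₀ : Set 𝒜) (hA₀ : IsAbelianSubcategory 𝒜 A₀) (hAH : AlmostHereditary 𝒜 A₀)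
    (E : DerivedCategory 𝒜) (hE0 : ¬ IsZero E)
    (hEbdd : IsBoundedComplex 𝒜 E)
    (hE : ∀ i : ℤ, (DerivedCategory.homologyFunctor 𝒜 i).obj E ∈ A₀)
    -- `m₀` is the maximal integer such that `H^{m₀}(E) ≠ 0`
    (m₀ : ℤ) (hm₀ : ¬ IsZero ((DerivedCategory.homologyFunctor 𝒜 m₀).obj E))
    (hm₀max : ∀ i : ℤ, m₀ < i → IsZero ((DerivedCategory.homologyFunctor 𝒜 i).obj E))
    -- `Hom^n(E,E) = 0` for all `n < 0`
    (hvan : ∀ n : ℤ, n < 0 → ∀ f : E ⟶ E⟦n⟧, f = 0)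
    -- `Hom^1(H^{m₀}(E), H^{m₀-1}(E)) ≠ 0`
    (hext : ∃ f : degZero 𝒜 ((DerivedCategory.homologyFunctor 𝒜 m₀).obj E) ⟶
      (degZero 𝒜 ((DerivedCategory.homologyFunctor 𝒜 (m₀ - 1)).obj E))⟦(1 : ℤ)⟧, f ≠ 0) :
    ∃ ψ : E ⟶ E, ψ ≠ 0 ∧ ψ ≫ ψ = 0 := by
  have hLE : E.IsLE m₀ := (isLE_iff E m₀).2 hm₀max
  obtain ⟨a, b, hab⟩ := hEbdd
  have hGE : E.IsGE a := (isGE_iff E a).2 fun i hi ↦ hab i (Or.inl hi)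
  obtain ⟨eH⟩ := nonempty_iso_truncGE E m₀
  let t : TStructure (DerivedCategory 𝒜) := TStructure.t
  have hvan' : ∀ p : ℤ, 0 < p → HomVan E E p := fun p hp ↦
    (homVan_iff_tgt p (-p) (by lia)).2 (hvan (-p) (by lia))
  -- the vanishing of all morphisms from the top cohomology to the lower truncations
  have key : ∀ n : ℕ, a + n < m₀ →
      ∀ p, HomVan ((t.truncGE m₀).obj E) ((t.truncLT (a + n)).obj E) p := by
    intro n
    induction n with
    | zero =>
      intro _ p f
      have hz : IsZero ((t.truncLT (a + (0 : ℕ))).obj E) := by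
        have : t.IsGE E (a + (0 : ℕ)) := by simpa using hGE
        exact t.isZero_truncLT_obj_of_isGE _ E
      exact hz.eq_of_tgt _ _
    | succ n ih =>
      intro hn p
      push_cast at hn
      have hS := ih (by lia)
      obtain ⟨eK⟩ := nonempty_iso_K E (a + n)
      have hpos : ∀ q : ℤ, 0 < q → m₀ - (a + n) - 1 ≤ q → HomVan ((t.truncGE m₀).obj E)
          ((t.truncGE (a + n)).obj ((t.truncLT (a + n + 1)).obj E)) q := by
        intro q hq hq'
        by_contra hcon
        obtain ⟨g, hg⟩ := core_trunc E m₀ (a + n) q (by lia) hq' (hS _) hcon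
        exact hg (hvan' q hq _)
      have hall := hAH _ _ (hE m₀) (hE (a + n))
        (homVan_zero_iff.1 ((homVan_degZero_iff eH eK 0 (m₀ - (a + n)) (by lia)).2
          (hpos _ (by lia) (by lia))))
        ((homVan_iff_tgt (-1) 1 (by lia)).1
          ((homVan_degZero_iff eH eK (-1) (m₀ - (a + n) - 1) (by lia)).2
          (hpos _ (by lia) (by lia))))
      have := homVan_step E m₀ (a + n) hS (fun q ↦
        (homVan_degZero_iff eH eK (q + (a + n) - m₀) q (by lia)).1
          ((homVan_iff_tgt _ (-(q + (a + n) - m₀)) (by lia)).2 (hall _))) p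
      rw [show a + ((n + 1 : ℕ) : ℤ) = a + n + 1 by push_cast; ring]
      exact this
  have key' : ∀ p, HomVan ((t.truncGE m₀).obj E) ((t.truncLT (m₀ - 1)).obj E) p := by
    by_cases h : a ≤ m₀ - 1
    · obtain ⟨n, hn⟩ := Int.eq_ofNat_of_zero_le (sub_nonneg.2 h)
      have := key n (by lia)
      rwa [show a + (n : ℤ) = m₀ - 1 by lia] at this
    · intro p f
      have hz : IsZero ((t.truncLT (m₀ - 1)).obj E) := by
        have : t.IsGE E (m₀ - 1) := t.isGE_of_ge E (m₀ - 1) a (by lia)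
        exact t.isZero_truncLT_obj_of_isGE _ E
      exact hz.eq_of_tgt _ _
  obtain ⟨eK⟩ := nonempty_iso_K E (m₀ - 1)
  obtain ⟨f, hf⟩ := hext
  have hnon : ¬ HomVan ((t.truncGE m₀).obj E)
      ((t.truncGE (m₀ - 1)).obj ((t.truncLT (m₀ - 1 + 1)).obj E)) 0 := fun hcon ↦
    hf ((homVan_iff_tgt (-1) 1 (by lia)).1
      ((homVan_degZero_iff eH eK (-1) 0 (by lia)).2 hcon) f)
  obtain ⟨g, hg⟩ := core_trunc E m₀ (m₀ - 1) 0 (by lia) (by lia) (key' _) hnon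
  have hcomp : (t.truncLTι (m₀ - 1 + 1)).app E ≫ (t.truncGEπ m₀).app E = 0 := by
    have : t.IsLE ((t.truncLT (m₀ - 1 + 1)).obj E) (m₀ - 1) := inferInstance
    exact t.zero _ (m₀ - 1) m₀ (by lia)
  exact exists_square_zero _ _ hcomp g hg
end

section
/- Let 𝒜 be an abelian category and let 𝒜₀ ⊆ 𝒜 be a full abelian subcategory which is almost hereditary in 𝒜. Let E be a nonzero object of D^b(𝒜) all of whose cohomology objects lie in 𝒜₀. Assume that (a) Hom^n(E, E) = 0 for all integers n < 0, and (b) every nonzero endomorphism of E in D^b(𝒜) is an isomorphism. Then there exist an object A of 𝒜₀ and an integer m such that E ≅ A[m] in D^b(𝒜). -/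
open CategoryTheory Limits DerivedCategory

universe w v u

noncomputable section

section helpers

open Pretriangulated Triangulated Triangulated.TStructure DerivedCategory.TStructure

variable {𝒜 : Type u} [Category.{v} 𝒜] [Abelian 𝒜] [HasDerivedCategory.{w} 𝒜]

/-- All shifted Hom groups from `B` to `X` vanish. -/
def AllHomZero (B X : DerivedCategory 𝒜) : Prop := ∀ (p : ℤ) (f : B ⟶ X⟦p⟧), f = 0

lemma AllHomZero.shift {B X : DerivedCategory 𝒜} (h : AllHomZero B X) (q p : ℤ)
    (f : B ⟶ X⟦q⟧⟦p⟧) : f = 0 := by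
  rw [← cancel_mono ((shiftFunctorAdd (DerivedCategory 𝒜) q p).inv.app X), zero_comp]
  exact h _ _

lemma AllHomZero.of_triangle {B : DerivedCategory 𝒜} (T : Triangle (DerivedCategory 𝒜))
    (hT : T ∈ distTriang _) (h₁ : AllHomZero B T.obj₁) (h₃ : AllHomZero B T.obj₃) :
    AllHomZero B T.obj₂ := by
  intro p f
  obtain ⟨g, hg⟩ := Triangle.coyoneda_exact₂ _ (Triangle.shift_distinguished T hT p) f (h₃ p _)
  rw [hg, h₁ p g]
  exact zero_comp

lemma hom_zero_shift_iff (M N : DerivedCategory 𝒜) (m k p q : ℤ) (h : k + p = q + m)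
    (H : ∀ f : M ⟶ N⟦q⟧, f = 0) (f : M⟦m⟧ ⟶ N⟦k⟧⟦p⟧) : f = 0 := by
  let e : N⟦k⟧⟦p⟧ ≅ N⟦q⟧⟦m⟧ :=
    ((shiftFunctorAdd' (DerivedCategory 𝒜) k p (k + p) rfl).symm ≪≫
      shiftFunctorAdd' (DerivedCategory 𝒜) q m (k + p) h.symm).app N
  rw [← cancel_mono e.hom, zero_comp]
  obtain ⟨g, hg⟩ := (shiftFunctor (DerivedCategory 𝒜) m).map_surjective (f ≫ e.hom)
  rw [← hg, H g, Functor.map_zero]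

lemma hom_zero_shift_iff' (M N : DerivedCategory 𝒜) (m k p q : ℤ) (h : k + p = q + m)
    (H : ∀ f : M⟦m⟧ ⟶ N⟦k⟧⟦p⟧, f = 0) (f : M ⟶ N⟦q⟧) : f = 0 := by
  let e : N⟦k⟧⟦p⟧ ≅ N⟦q⟧⟦m⟧ :=
    ((shiftFunctorAdd' (DerivedCategory 𝒜) k p (k + p) rfl).symm ≪≫
      shiftFunctorAdd' (DerivedCategory 𝒜) q m (k + p) h.symm).app N
  apply (shiftFunctor (DerivedCategory 𝒜) m).map_injective
  rw [Functor.map_zero, ← cancel_mono e.inv, zero_comp]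
  exact H _

/-- homology of a single complex -/
def homologySingleIso (n : ℤ) (M : 𝒜) :
    (DerivedCategory.homologyFunctor 𝒜 n).obj ((singleFunctor 𝒜 n).obj M) ≅ M :=
  (homologyFunctorFactors 𝒜 n).app ((HomologicalComplex.single 𝒜 _ n).obj M) ≪≫
    (HomologicalComplex.homologyFunctorSingleIso 𝒜 (ComplexShape.up ℤ) n).app M

/-- single functor as shift -/
def singleShiftIso (n : ℤ) (M : 𝒜) :
    (singleFunctor 𝒜 n).obj M ≅ (degZero 𝒜 M)⟦-n⟧ :=
  (((singleFunctors 𝒜).shiftIso (-n) n 0 (by lia)).app M).symm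

lemma isIso_homology_mor₂ (T : Triangle (DerivedCategory 𝒜)) (hT : T ∈ distTriang _) (n : ℤ)
    [h : T.obj₁.IsLE (n - 1)] : IsIso ((DerivedCategory.homologyFunctor 𝒜 n).map T.mor₂) := by
  have h0 := isZero_of_isLE T.obj₁ (n - 1) n (by lia)
  have h1 := isZero_of_isLE T.obj₁ (n - 1) (n + 1) (by lia)
  have := (HomologySequence.mono_homologyMap_mor₂_iff T hT n).2 (h0.eq_of_src _ _)
  have := (HomologySequence.epi_homologyMap_mor₂_iff T hT n (n + 1) rfl).2 (h1.eq_of_tgt _ _)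
  exact isIso_of_mono_of_epi _

lemma isIso_homology_mor₁ (T : Triangle (DerivedCategory 𝒜)) (hT : T ∈ distTriang _) (n : ℤ)
    [h : T.obj₃.IsGE (n + 1)] : IsIso ((DerivedCategory.homologyFunctor 𝒜 n).map T.mor₁) := by
  have h0 := isZero_of_isGE T.obj₃ (n + 1) n (by lia)
  have h1 := isZero_of_isGE T.obj₃ (n + 1) (n - 1) (by lia)
  have := (HomologySequence.epi_homologyMap_mor₁_iff T hT n).2 (h0.eq_of_tgt _ _)
  have := (HomologySequence.mono_homologyMap_mor₁_iff T hT (n - 1) n (by lia)).2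
    (h1.eq_of_src _ _)
  exact isIso_of_mono_of_epi _

lemma exists_iso_of_heart (A₀ : Set 𝒜) (hA₀ : IsAbelianSubcategory 𝒜 A₀)
    (K : DerivedCategory 𝒜) (n : ℤ) [K.IsGE n] [K.IsLE n] (X : 𝒜) (hX : X ∈ A₀)
    (e : X ≅ (DerivedCategory.homologyFunctor 𝒜 n).obj K) :
    ∃ M ∈ A₀, Nonempty (K ≅ (degZero 𝒜 M)⟦-n⟧) := by
  obtain ⟨M, ⟨e'⟩⟩ := exists_iso_singleFunctor_obj_of_isGE_of_isLE K n
  exact ⟨M, hA₀.2.1 X M hX ⟨e ≪≫ (DerivedCategory.homologyFunctor 𝒜 n).mapIso e' ≪≫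
    homologySingleIso n M⟩, ⟨e' ≪≫ singleShiftIso n M⟩⟩

lemma heart_zero (A₀ : Set 𝒜) (hAH : AlmostHereditary 𝒜 A₀) (M N : 𝒜) (hM : M ∈ A₀)
    (hN : N ∈ A₀) (B K : DerivedCategory 𝒜) (b i : ℤ) (e : B ≅ (degZero 𝒜 M)⟦-b⟧)
    (e' : K ≅ (degZero 𝒜 N)⟦-i⟧)
    (h : ∀ q : ℤ, q ≤ i - b + 1 → ∀ f : B ⟶ K⟦q⟧, f = 0) : AllHomZero B K := by
  have aux : ∀ q : ℤ, q ≤ i - b + 1 →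
      ∀ f : (degZero 𝒜 M)⟦-b⟧ ⟶ (degZero 𝒜 N)⟦-i⟧⟦q⟧, f = 0 := by
    intro q hq f
    have := h q hq (e.hom ≫ f ≫ e'.inv⟦q⟧')
    rwa [← cancel_epi e.hom, ← cancel_mono (e'.inv⟦q⟧'), comp_zero, zero_comp, Category.assoc]
  have key := hAH M N hM hN
    (fun f => by
      rw [← cancel_mono ((shiftFunctorZero (DerivedCategory 𝒜) ℤ).inv.app _), zero_comp]
      exact hom_zero_shift_iff' (degZero 𝒜 M) (degZero 𝒜 N) (-b) (-i) (i - b) 0 (by lia)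
        (aux (i - b) (by lia)) _)
    (fun f => hom_zero_shift_iff' (degZero 𝒜 M) (degZero 𝒜 N) (-b) (-i) (i - b + 1) 1 (by lia)
        (aux (i - b + 1) (by lia)) _)
  intro p f
  have := hom_zero_shift_iff (degZero 𝒜 M) (degZero 𝒜 N) (-b) (-i) p (-i + p + b) (by lia)
    (key _) (e.inv ≫ f ≫ e'.hom⟦p⟧')
  rwa [← cancel_epi e.inv, ← cancel_mono (e'.hom⟦p⟧'), comp_zero, zero_comp, Category.assoc]

lemma exists_lift_shift {B : DerivedCategory 𝒜} {X₁ X₂ X₃ : DerivedCategory 𝒜}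
    {u : X₁ ⟶ X₂} {v : X₂ ⟶ X₃} {w : X₃ ⟶ X₁⟦(1 : ℤ)⟧}
    (hT : Triangle.mk u v w ∈ distTriang (DerivedCategory 𝒜)) (h₁ : AllHomZero B X₁)
    (q : ℤ) (f : B ⟶ X₃⟦q⟧) : ∃ g : B ⟶ X₂⟦q⟧, f = g ≫ v⟦q⟧' := by
  obtain ⟨g, hg⟩ := Triangle.coyoneda_exact₃ _ (Triangle.shift_distinguished _ hT q) f
    (h₁.shift q 1 _)
  replace hg : f = (show B ⟶ X₂⟦q⟧ from g) ≫ (q.negOnePow • v⟦q⟧') := hg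
  exact ⟨q.negOnePow • (show B ⟶ X₂⟦q⟧ from g), by
    rw [hg, Linear.units_smul_comp, Linear.comp_units_smul]⟩

lemma eq_zero_of_comp_shift {Y : DerivedCategory 𝒜} {X₁ X₂ X₃ : DerivedCategory 𝒜}
    {u : X₁ ⟶ X₂} {v : X₂ ⟶ X₃} {w : X₃ ⟶ X₁⟦(1 : ℤ)⟧}
    (hT : Triangle.mk u v w ∈ distTriang (DerivedCategory 𝒜))
    (q : ℤ) (f : Y ⟶ X₁⟦q⟧) (hf : f ≫ u⟦q⟧' = 0)
    (h : ∀ k : Y ⟶ X₃⟦q⟧⟦(-1 : ℤ)⟧, k = 0) : f = 0 := by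
  have hf' : f ≫ (q.negOnePow • u⟦q⟧') = 0 := by
    rw [Linear.comp_units_smul, hf, smul_zero]
  obtain ⟨k, hk⟩ := Triangle.coyoneda_exact₂ _ (inv_rot_of_distTriang _
      (Triangle.shift_distinguished _ hT q)) f hf'
  rw [hk, h k]
  exact zero_comp

lemma step_zero (E : DerivedCategory 𝒜)
    (hvan : ∀ n : ℤ, n < 0 → ∀ f : E ⟶ E⟦n⟧, f = 0)
    (hend : ∀ f : E ⟶ E, f ≠ 0 → IsIso f) (b : ℤ) [E.IsLE b]
    (hb : ¬ IsZero ((DerivedCategory.homologyFunctor 𝒜 b).obj E))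
    (i : ℤ) (hi : i < b) (hP : AllHomZero ((t.truncGE b).obj E) ((t.truncLT i).obj E))
    (q : ℤ) (hq : q ≤ i - b + 1)
    (f : (t.truncGE b).obj E ⟶ ((t.truncGELT i (i + 1)).obj E)⟦q⟧) : f = 0 := by
  obtain ⟨g, hg⟩ := exists_lift_shift
    (t.triangleLTLTGELT_distinguished i (i + 1) (by lia) E) hP q f
  change (t.truncGE b).obj E ⟶ ((t.truncLT (i + 1)).obj E)⟦q⟧ at g
  have hcomp : (t.truncGEπ b).app E ≫ g ≫ ((t.truncLTι (i + 1)).app E)⟦q⟧' = 0 := by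
    by_cases hq0 : q < 0
    · exact hvan q hq0 _
    · obtain rfl : q = 0 := by lia
      obtain rfl : i = b - 1 := by lia
      by_contra hne
      let z := (shiftFunctorZero (DerivedCategory 𝒜) ℤ).app E
      let φ : E ⟶ E :=
        ((t.truncGEπ b).app E ≫ g ≫ ((t.truncLTι (b - 1 + 1)).app E)⟦(0 : ℤ)⟧') ≫ z.hom
      have hφ : φ ≠ 0 := fun h0 => hne (by
        rw [← cancel_mono z.hom, zero_comp]; exact h0)
      have := hend φ hφ
      have hLE : IsLE (((t.truncLT (b - 1 + 1)).obj E)⟦(0 : ℤ)⟧) (b - 1) := by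
        have : t.IsLE ((t.truncLT (b - 1 + 1)).obj E) (b - 1) :=
          t.isLE_truncLT_obj ..
        exact t.isLE_shift _ (b - 1) 0 (b - 1)
      have hz := isZero_of_isLE _ (b - 1) b (by lia) (hX := hLE)
      apply hb
      rw [IsZero.iff_id_eq_zero, ← CategoryTheory.Functor.map_id]
      have : 𝟙 E = ((t.truncGEπ b).app E ≫ g) ≫
          (((t.truncLTι (b - 1 + 1)).app E)⟦(0 : ℤ)⟧' ≫ z.hom ≫ inv φ) := by
        rw [← IsIso.hom_inv_id φ]
        simp only [φ, Category.assoc]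
      rw [this, Functor.map_comp, hz.eq_of_tgt ((DerivedCategory.homologyFunctor 𝒜 b).map _) 0,
        zero_comp]
  have hπg : (t.truncGEπ b).app E ≫ g = 0 := by
    refine eq_zero_of_comp_shift (t.triangleLTGE_distinguished (i + 1) E) q _
      ((Category.assoc _ _ _).trans hcomp) fun k => ?_
    change E ⟶ ((t.truncGE (i + 1)).obj E)⟦q⟧⟦(-1 : ℤ)⟧ at k
    have h1 := t.isGE_shift ((t.truncGE (i + 1)).obj E) (i + 1) q (i + 1 - q)
    have h2 := t.isGE_shift (((t.truncGE (i + 1)).obj E)⟦q⟧) (i + 1 - q) (-1) (i + 2 - q)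
    exact t.zero k b (i + 2 - q)
  have hπf : (t.truncGEπ b).app E ≫ f = 0 := by
    rw [hg]
    exact (Category.assoc _ _ _).symm.trans ((congrArg (· ≫ _) hπg).trans zero_comp)
  obtain ⟨k, hk⟩ := Triangle.yoneda_exact₃ _ (t.triangleLTGE_distinguished b E) f hπf
  have : k = 0 := by
    change ((t.truncLT b).obj E)⟦(1 : ℤ)⟧ ⟶ _ at k
    have h1 := t.isLE_shift ((t.truncLT b).obj E) (b - 1) 1 (b - 2)
    have h2 := t.isGE_shift ((t.truncGELT i (i + 1)).obj E) i q (i - q)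
    exact t.zero k (b - 2) (i - q)
  rw [hk, this]
  exact comp_zero

end helpers

end

open Pretriangulated Triangulated DerivedCategory.TStructure

theorem stmt3 {𝒜 : Type u} [Category.{v} 𝒜] [Abelian 𝒜] [HasDerivedCategory.{w} 𝒜]
    (A₀ : Set 𝒜) (hA₀ : IsAbelianSubcategory 𝒜 A₀) (hAH : AlmostHereditary 𝒜 A₀)
    (E : DerivedCategory 𝒜) (hE0 : ¬ IsZero E)
    (hEbdd : IsBoundedComplex 𝒜 E)
    (hE : ∀ i : ℤ, (DerivedCategory.homologyFunctor 𝒜 i).obj E ∈ A₀)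
    -- (a) `Hom^n(E,E) = 0` for all `n < 0`
    (hvan : ∀ n : ℤ, n < 0 → ∀ f : E ⟶ E⟦n⟧, f = 0)
    -- (b) every nonzero endomorphism of `E` is an isomorphism
    (hend : ∀ f : E ⟶ E, f ≠ 0 → IsIso f) :
    ∃ A ∈ A₀, ∃ m : ℤ, Nonempty (E ≅ (degZero 𝒜 A)⟦m⟧) := by
  obtain ⟨a, c, hac⟩ := hEbdd
  have hGE : E.IsGE a := (isGE_iff E a).2 fun i hi => hac i (Or.inl hi)
  have hex : ∃ n : ℤ, ¬ IsZero ((DerivedCategory.homologyFunctor 𝒜 n).obj E) := by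
    by_contra! hcon
    have h1 : E.IsGE 1 := (isGE_iff E 1).2 fun i _ => hcon i
    have h0 : E.IsLE 0 := (isLE_iff E 0).2 fun i _ => hcon i
    exact hE0 (t.isZero E 0 1)
  obtain ⟨b, hb, hmax⟩ := Int.exists_greatest_of_bdd
    (P := fun n => ¬ IsZero ((DerivedCategory.homologyFunctor 𝒜 n).obj E))
    ⟨c, fun z hz => by
      by_contra hlt
      exact hz (hac z (Or.inr (by lia)))⟩ hex
  have hLE : E.IsLE b := (isLE_iff E b).2 fun i hi => by
    by_contra hne
    have := hmax i hne
    lia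
  -- the top cohomology
  have hBiso : IsIso ((DerivedCategory.homologyFunctor 𝒜 b).map ((t.truncGEπ b).app E)) :=
    isIso_homology_mor₂ _ (t.triangleLTGE_distinguished b E) b
      (h := inferInstanceAs (t.IsLE ((t.truncLT b).obj E) (b - 1)))
  obtain ⟨M, hM, ⟨eM⟩⟩ := exists_iso_of_heart A₀ hA₀ ((t.truncGE b).obj E) b _ (hE b)
    (asIso ((DerivedCategory.homologyFunctor 𝒜 b).map ((t.truncGEπ b).app E)))
  have main : ∀ d : ℕ, ∀ i : ℤ, i ≤ b → i ≤ a + d →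
      AllHomZero ((t.truncGE b).obj E) ((t.truncLT i).obj E) := by
    intro d
    induction d with
    | zero =>
      intro i hi hia p f
      have : t.IsGE E i := t.isGE_of_ge E i a
      have hz := t.isZero_truncLT_obj_of_isGE i E
      exact ((shiftFunctor (DerivedCategory 𝒜) p).map_isZero hz).eq_of_tgt _ _
    | succ d ih =>
      intro j hj hja
      obtain ⟨i, rfl⟩ : ∃ i, j = i + 1 := ⟨j - 1, by lia⟩
      have hP := ih i (by lia) (by push_cast at hja; lia)
      have hK1 : IsIso ((DerivedCategory.homologyFunctor 𝒜 i).map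
          ((t.truncLTι (i + 1)).app E)) :=
        isIso_homology_mor₁ _ (t.triangleLTGE_distinguished (i + 1) E) i
          (h := inferInstanceAs (t.IsGE ((t.truncGE (i + 1)).obj E) (i + 1)))
      have hK2 : IsIso ((DerivedCategory.homologyFunctor 𝒜 i).map
          ((t.truncGEπ i).app ((t.truncLT (i + 1)).obj E))) :=
        isIso_homology_mor₂ _ (t.triangleLTGE_distinguished i _) i
          (h := inferInstanceAs (t.IsLE ((t.truncLT i).obj _) (i - 1)))
      have hKLE : IsLE ((t.truncGELT i (i + 1)).obj E) i := by
        have : t.IsLE ((t.truncLT (i + 1)).obj E) i := t.isLE_truncLT_obj ..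
        dsimp
        infer_instance
      have hKGE : IsGE ((t.truncGELT i (i + 1)).obj E) i := by
        dsimp
        infer_instance
      obtain ⟨N, hN, ⟨eN⟩⟩ := exists_iso_of_heart A₀ hA₀ ((t.truncGELT i (i + 1)).obj E) i _
        (hE i)
        ((asIso ((DerivedCategory.homologyFunctor 𝒜 i).map ((t.truncLTι (i + 1)).app E))).symm ≪≫
          asIso ((DerivedCategory.homologyFunctor 𝒜 i).map
          ((t.truncGEπ i).app ((t.truncLT (i + 1)).obj E))))
      exact AllHomZero.of_triangle _
        (t.triangleLTLTGELT_distinguished i (i + 1) (by lia) E) hP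
        (heart_zero A₀ hAH M N hM hN _ _ b i eM eN
          (fun q hq f => step_zero E hvan hend b hb i (by lia) hP q hq f))
  have hP := main (b - a).toNat b le_rfl (by lia)
  obtain ⟨s, hs⟩ := Triangle.coyoneda_exact₃ _ (t.triangleLTGE_distinguished b E)
    (𝟙 ((t.truncGE b).obj E)) (hP 1 _)
  change (t.truncGE b).obj E ⟶ E at s
  replace hs : 𝟙 ((t.truncGE b).obj E) = s ≫ (t.truncGEπ b).app E := hs
  have hne : (t.truncGEπ b).app E ≫ s ≠ 0 := by
    intro h0
    have h1 : 𝟙 ((t.truncGE b).obj E) = 0 := by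
      have : s ≫ ((t.truncGEπ b).app E ≫ s) ≫ (t.truncGEπ b).app E = 𝟙 _ := by
        rw [Category.assoc, ← hs, Category.comp_id, ← hs]
      rw [← this, h0, zero_comp, comp_zero]
    have hz : IsZero ((t.truncGE b).obj E) := (IsZero.iff_id_eq_zero _).2 h1
    exact hb (((DerivedCategory.homologyFunctor 𝒜 b).map_isZero hz).of_iso
      (asIso ((DerivedCategory.homologyFunctor 𝒜 b).map ((t.truncGEπ b).app E))))
  have hiso := hend _ hne
  have hidem : (t.truncGEπ b).app E ≫ s = 𝟙 E := by
    rw [← cancel_epi ((t.truncGEπ b).app E ≫ s), Category.comp_id, Category.assoc,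
      ← Category.assoc s, ← hs, Category.id_comp]
  exact ⟨M, hM, -b, ⟨Iso.mk ((t.truncGEπ b).app E) s hidem hs.symm ≪≫ eM⟩⟩
end

section
/- Let (R, 𝔪) be a commutative Artinian local ring and let 𝒜 be an R-linear abelian category such that the full subcategory 𝒜_𝔪 of objects annihilated by 𝔪 is almost hereditary in 𝒜. Let σ = (Z, P) be a stability condition on D^b(𝒜). If an object E of D^b(𝒜) is σ-stable, then E is indecomposable (E is not isomorphic to a biproduct of two nonzero objects) and there exist an object A of 𝒜_𝔪 and an integer m such that E ≅ A[m] in D^b(𝒜). -/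
open CategoryTheory Limits Pretriangulated DerivedCategory

universe w v u

section StabilityDefs

variable {D : Type*} [Category D] [HasZeroObject D] [Preadditive D] [HasShift D ℤ]
  [∀ n : ℤ, (CategoryTheory.shiftFunctor D n).Additive] [Pretriangulated D]

/-- An object `E` has a Harder–Narasimhan filtration with respect to the slicing `P`:
a finite sequence `0 = X₀ → X₁ → ⋯ → Xₙ ≅ E` such that the cone of each
`X_{i-1} → X_i` is a nonzero object of `P(φ_i)`, with `φ₁ > φ₂ > ⋯ > φₙ`. -/
def HasHNFiltration (P : ℝ → Set D) (E : D) : Prop :=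
  ∃ (n : ℕ) (X : Fin (n + 1) → D) (f : ∀ i : Fin n, X i.castSucc ⟶ X i.succ)
    (φ : Fin n → ℝ), IsZero (X 0) ∧ Nonempty (X (Fin.last n) ≅ E) ∧ StrictAnti φ ∧
    ∀ i : Fin n, ∃ (A : D) (g : X i.succ ⟶ A) (h : A ⟶ (X i.castSucc)⟦(1 : ℤ)⟧),
      (Triangle.mk (f i) g h ∈ distTriang D) ∧ ¬ IsZero A ∧ A ∈ P (φ i)

/-- A (Bridgeland) stability condition on the full triangulated subcategory of `D`
determined by the collection of objects `B`. It consists of a central charge `Z`,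
additive on distinguished triangles of the subcategory, and of strictly full additive
subcategories `P φ ⊆ B` for `φ ∈ ℝ` satisfying the axioms (s1)–(s4). -/
structure StabilityConditionOn (B : Set D) where
  /-- the central charge -/
  Z : D → ℂ
  /-- the slicing -/
  P : ℝ → Set D
  P_le : ∀ φ : ℝ, P φ ⊆ B
  -- each `P φ` is a strictly full additive subcategory
  P_iso : ∀ (φ : ℝ) (X Y : D), X ∈ P φ → Nonempty (X ≅ Y) → Y ∈ P φ
  P_zero : ∀ (φ : ℝ) (X : D), IsZero X → X ∈ P φ
  P_biprod : ∀ (φ : ℝ) (X Y : D) (b : BinaryBicone X Y), b.IsBilimit →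
    X ∈ P φ → Y ∈ P φ → b.pt ∈ P φ
  -- `Z` is additive on distinguished triangles of the subcategory
  Z_add : ∀ T ∈ distTriang D, T.obj₁ ∈ B → Triangle.obj₂ T ∈ B → T.obj₃ ∈ B →
    Z (Triangle.obj₂ T) = Z T.obj₁ + Z T.obj₃
  s1 : ∀ (φ : ℝ) (E : D), E ∈ P φ → ¬ IsZero E →
    ∃ m : ℝ, 0 < m ∧ Z E = (m : ℂ) * Complex.exp ((Real.pi : ℂ) * Complex.I * (φ : ℂ))
  s2 : ∀ (φ ψ : ℝ), ψ < φ → ∀ E ∈ P φ, ∀ F ∈ P ψ, ∀ f : E ⟶ F, f = 0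
  s3 : ∀ (φ : ℝ) (X : D), X ∈ P (φ + 1) ↔ ∃ Y ∈ P φ, Nonempty (X ≅ Y⟦(1 : ℤ)⟧)
  s4 : ∀ E ∈ B, ¬ IsZero E → HasHNFiltration P E

variable {B : Set D}

/-- An object is `σ`-semistable of phase `φ` if it is a nonzero object of `P φ`. -/
def StabilityConditionOn.IsSemistable (σ : StabilityConditionOn B) (φ : ℝ) (E : D) : Prop :=
  E ∈ σ.P φ ∧ ¬ IsZero E

/-- An object is `σ`-stable if it is `σ`-semistable of some phase `φ` and is simple in
`P φ`: in any distinguished triangle `A ⟶ E ⟶ C ⟶ A[1]` with `A, C ∈ P φ`, either `A`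
or `C` is zero. -/
def StabilityConditionOn.IsStable (σ : StabilityConditionOn B) (φ : ℝ) (E : D) : Prop :=
  σ.IsSemistable φ E ∧
  ∀ (A C : D) (f : A ⟶ E) (g : E ⟶ C) (h : C ⟶ A⟦(1 : ℤ)⟧),
    (Triangle.mk f g h ∈ distTriang D) → A ∈ σ.P φ → C ∈ σ.P φ → IsZero A ∨ IsZero C

/-- `σ` has the Jordan–Hölder property: every `σ`-semistable object of phase `φ` has a
finite filtration whose successive cones are `σ`-stable of phase `φ`. -/
def StabilityConditionOn.HasJHProperty (σ : StabilityConditionOn B) : Prop :=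
  ∀ (φ : ℝ) (E : D), E ∈ σ.P φ → ¬ IsZero E →
    ∃ (n : ℕ) (X : Fin (n + 1) → D) (f : ∀ i : Fin n, X i.castSucc ⟶ X i.succ),
      IsZero (X 0) ∧ Nonempty (X (Fin.last n) ≅ E) ∧
      ∀ i : Fin n, ∃ (A : D) (g : X i.succ ⟶ A) (h : A ⟶ (X i.castSucc)⟦(1 : ℤ)⟧),
        (Triangle.mk (f i) g h ∈ distTriang D) ∧ σ.IsStable φ A

end StabilityDefs

set_option linter.unusedSectionVars false

section StabAux

variable {D : Type*} [Category D] [HasZeroObject D] [Preadditive D] [HasShift D ℤ]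
  [∀ n : ℤ, (CategoryTheory.shiftFunctor D n).Additive] [Pretriangulated D]

/-- Iterated extensions of nonzero semistable objects with decreasing phases; the two real
parameters are the first (largest) and last (smallest) phase. -/
inductive Filt (P : ℝ → Set D) : ℝ → ℝ → D → Prop
  | single (φ : ℝ) (A : D) (hA : A ∈ P φ) (h0 : ¬ IsZero A) : Filt P φ φ A
  | ext (hi lo ψ : ℝ) (X Y A : D) (f : X ⟶ Y) (g : Y ⟶ A) (h : A ⟶ X⟦(1 : ℤ)⟧)
      (hX : Filt P hi lo X) (hT : Triangle.mk f g h ∈ distTriang D)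
      (hA : A ∈ P ψ) (h0 : ¬ IsZero A) (hlt : ψ < lo) : Filt P hi ψ Y

variable {B : Set D} (σ : StabilityConditionOn B)

lemma Filt.of_iso {hi lo : ℝ} {X Y : D} (h : Filt σ.P hi lo X) (e : X ≅ Y) :
    Filt σ.P hi lo Y := by
  cases h with
  | single _ hA h0 =>
    exact Filt.single _ _ (σ.P_iso _ _ _ hA ⟨e⟩) (fun h => h0 (h.of_iso e))
  | ext lo _ X' _ A f g h hX hT hA h0 hlt =>
    refine Filt.ext hi lo _ X' Y A (f ≫ e.hom) (e.inv ≫ g) h hX ?_ hA h0 hlt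
    refine isomorphic_distinguished _ hT _ ?_
    exact Triangle.isoMk _ _ (Iso.refl _) e.symm (Iso.refl _)
      (by change (f ≫ e.hom) ≫ e.inv = 𝟙 _ ≫ f; simp)
      (by change (e.inv ≫ g) ≫ 𝟙 _ = e.inv ≫ g; simp)
      (by change h ≫ (𝟙 X')⟦(1 : ℤ)⟧' = 𝟙 _ ≫ h; simp)

lemma Filt.le {P : ℝ → Set D} {hi lo : ℝ} {X : D} (h : Filt P hi lo X) : lo ≤ hi := by
  induction h with
  | single => exact le_rfl
  | ext _ _ _ _ _ _ _ _ _ _ _ _ hlt ih => linarith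

lemma exists_filt {E : D} (hE : E ∈ B) (h0 : ¬ IsZero E) : ∃ hi lo, Filt σ.P hi lo E := by
  obtain ⟨n, X, f, φ, hX0, ⟨e⟩, hφ, H⟩ := σ.s4 E hE h0
  have key : ∀ (k : ℕ) (hk : k < n), ∃ hi, Filt σ.P hi (φ ⟨k, hk⟩) (X (Fin.succ ⟨k, hk⟩)) := by
    intro k
    induction k with
    | zero =>
      intro hk
      obtain ⟨A, g, h, hT, hA0, hA⟩ := H ⟨0, hk⟩
      refine ⟨φ ⟨0, hk⟩, ?_⟩
      have : IsIso g := (Triangle.isZero₁_iff_isIso₂ _ hT).1 hX0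
      exact (Filt.single _ A hA hA0).of_iso σ (asIso g).symm
    | succ k ih =>
      intro hk
      obtain ⟨hi, hF⟩ := ih (by omega)
      obtain ⟨A, g, h, hT, hA0, hA⟩ := H ⟨k + 1, hk⟩
      exact ⟨hi, Filt.ext hi _ _ _ _ A _ g h hF hT hA hA0
        (hφ (by simp [Fin.lt_def]))⟩
  rcases n with _ | n
  · exact (h0 (hX0.of_iso e.symm)).elim
  · obtain ⟨hi, hF⟩ := key n (by omega)
    exact ⟨hi, _, hF.of_iso σ e⟩

lemma P_shift_one {φ : ℝ} {X : D} (h : X ∈ σ.P φ) : X⟦(1 : ℤ)⟧ ∈ σ.P (φ + 1) :=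
  (σ.s3 _ _).2 ⟨X, h, ⟨Iso.refl _⟩⟩

lemma P_shift_neg_one {φ : ℝ} {X : D} (h : X ∈ σ.P (φ + 1)) : X⟦(-1 : ℤ)⟧ ∈ σ.P φ := by
  obtain ⟨Y, hY, ⟨e⟩⟩ := (σ.s3 _ _).1 h
  exact σ.P_iso _ _ _ hY ⟨(shiftShiftNeg Y (1 : ℤ)).symm ≪≫ (shiftFunctor D (-1 : ℤ)).mapIso e.symm⟩

lemma P_shift_neg_one' {φ : ℝ} {X : D} (h : X ∈ σ.P φ) : X⟦(-1 : ℤ)⟧ ∈ σ.P (φ - 1) :=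
  P_shift_neg_one σ (by simpa using h)

lemma P_shift_neg_nat {φ : ℝ} {X : D} (h : X ∈ σ.P φ) (n : ℕ) :
    X⟦(-(n : ℤ))⟧ ∈ σ.P (φ - n) := by
  induction n with
  | zero =>
    refine σ.P_iso _ X _ (by simpa using h) ⟨?_⟩
    exact ((shiftFunctorZero' D (-((0 : ℕ) : ℤ)) (by simp)).app X).symm
  | succ n ih =>
    have := P_shift_neg_one' σ ih
    refine σ.P_iso _ _ _ (by rw [show φ - ((n + 1 : ℕ) : ℝ) = φ - n - 1 by push_cast; ring]; exact this) ⟨?_⟩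
    exact ((shiftFunctorAdd' D (-(n : ℤ)) (-1) (-((n + 1 : ℕ) : ℤ)) (by push_cast; ring)).app X).symm

lemma Filt.hom_right {hi lo : ℝ} {X : D} (h : Filt σ.P hi lo X) {ψ : ℝ} (hψ : ψ < lo)
    {W : D} (hW : W ∈ σ.P ψ) (f : X ⟶ W) : f = 0 := by
  induction h with
  | single A hA h0 => exact σ.s2 _ _ hψ _ hA _ hW f
  | ext lo ψ' X Y A a b c hX hT hA h0 hlt ih =>
    obtain ⟨g, hg⟩ := Triangle.yoneda_exact₂ _ hT f (ih (by linarith) _)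
    have : g = 0 := σ.s2 _ _ hψ _ hA _ hW g
    rw [hg, this, comp_zero]; rfl

lemma Filt.nonzero_hom_from {hi lo : ℝ} {X : D} (h : Filt σ.P hi lo X) :
    ∃ (A : D) (_ : A ∈ σ.P hi) (a : A ⟶ X), a ≠ 0 := by
  induction h with
  | single A hA h0 => exact ⟨A, hA, 𝟙 A, fun h => h0 ((IsZero.iff_id_eq_zero _).2 h)⟩
  | ext lo ψ' X Y A a b c hX hT hA h0 hlt ih =>
    obtain ⟨A', hA', f, hf⟩ := ih
    refine ⟨A', hA', f ≫ a, fun h0 => hf ?_⟩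
    obtain ⟨g, hg⟩ := Triangle.coyoneda_exact₂ _ (inv_rot_of_distTriang _ hT) f h0
    have hle := hX.le
    have : g = 0 := σ.s2 _ _ (by linarith) _ hA' _ (P_shift_neg_one' σ hA) g
    rw [hg, this, zero_comp]; rfl

lemma hom_shift_one_eq_zero {X W : D} (h : ∀ f : X ⟶ W⟦(-1 : ℤ)⟧, f = 0)
    (f : X⟦(1 : ℤ)⟧ ⟶ W) : f = 0 := by
  have h1 := h ((shiftShiftNeg X (1 : ℤ)).inv ≫ f⟦(-1 : ℤ)⟧')
  have h2 : f⟦(-1 : ℤ)⟧' = 0 := by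
    rw [← cancel_epi (shiftShiftNeg X (1 : ℤ)).inv, h1, comp_zero]
  exact (shiftFunctor D (-1 : ℤ)).map_injective (by rw [h2, Functor.map_zero])

lemma Filt.nonzero_hom_to {hi lo : ℝ} {X : D} (h : Filt σ.P hi lo X) :
    ∃ (A : D) (_ : A ∈ σ.P lo) (a : X ⟶ A), a ≠ 0 := by
  cases h with
  | single _ hA h0 => exact ⟨X, hA, 𝟙 X, fun h => h0 ((IsZero.iff_id_eq_zero _).2 h)⟩
  | ext lo _ X' _ A a b c hX hT hA h0 hlt =>
    refine ⟨A, hA, b, fun hb => h0 ((IsZero.iff_id_eq_zero _).2 ?_)⟩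
    obtain ⟨g, hg⟩ := Triangle.yoneda_exact₃ _ hT (𝟙 A) (by
      change b ≫ 𝟙 A = 0
      rw [hb, zero_comp])
    have : g = 0 := hom_shift_one_eq_zero
      (fun f => hX.hom_right σ (by linarith) (P_shift_neg_one' σ hA) f) g
    rw [this, comp_zero] at hg
    exact hg

lemma Filt.not_isZero {hi lo : ℝ} {X : D} (h : Filt σ.P hi lo X) : ¬ IsZero X := by
  obtain ⟨A, _, a, ha⟩ := h.nonzero_hom_from σ
  exact fun h0 => ha (h0.eq_of_tgt _ _)


lemma Filt.mem (hBext : ∀ T ∈ distTriang D, T.obj₁ ∈ B → T.obj₃ ∈ B → Triangle.obj₂ T ∈ B)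
    {hi lo : ℝ} {X : D} (h : Filt σ.P hi lo X) : X ∈ B := by
  induction h with
  | single A hA h0 => exact σ.P_le _ hA
  | ext lo ψ' X Y A a b c hX hT hA h0 hlt ih => exact hBext _ hT ih (σ.P_le _ hA)

/-- The signed distance of the central charge of `X` to the line of phase `φ`. -/
noncomputable def sheight (φ : ℝ) (X : D) : ℝ :=
  (σ.Z X * Complex.exp (-((Real.pi : ℂ) * Complex.I * (φ : ℂ)))).im

lemma sheight_of_mem {φ ψ : ℝ} {A : D} (hA : A ∈ σ.P ψ) (h0 : ¬ IsZero A) :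
    ∃ m : ℝ, 0 < m ∧ sheight σ φ A = m * Real.sin (Real.pi * (ψ - φ)) := by
  obtain ⟨m, hm, hZ⟩ := σ.s1 _ _ hA h0
  refine ⟨m, hm, ?_⟩
  unfold sheight
  rw [hZ, mul_assoc, ← Complex.exp_add]
  have : (Real.pi : ℂ) * Complex.I * (ψ : ℂ) + -((Real.pi : ℂ) * Complex.I * (φ : ℂ))
      = ((Real.pi * (ψ - φ) : ℝ) : ℂ) * Complex.I := by push_cast; ring
  rw [this, Complex.im_ofReal_mul, Complex.exp_ofReal_mul_I_im]

end StabAux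

section StabAux2

variable {D : Type*} [Category D] [HasZeroObject D] [Preadditive D] [HasShift D ℤ]
  [∀ n : ℤ, (CategoryTheory.shiftFunctor D n).Additive] [Pretriangulated D]
  {B : Set D} (σ : StabilityConditionOn B)

lemma sheight_add {φ : ℝ} {T : Triangle D} (hT : T ∈ distTriang D) (h1 : T.obj₁ ∈ B)
    (h2 : Triangle.obj₂ T ∈ B) (h3 : T.obj₃ ∈ B) :
    sheight σ φ (Triangle.obj₂ T) = sheight σ φ T.obj₁ + sheight σ φ T.obj₃ := by
  unfold sheight
  rw [σ.Z_add T hT h1 h2 h3, add_mul, Complex.add_im]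

lemma sheight_nonneg_of_mem {φ ψ : ℝ} {A : D} (hA : A ∈ σ.P ψ) (h0 : ¬ IsZero A)
    (h1 : φ ≤ ψ) (h2 : ψ ≤ φ + 1) : 0 ≤ sheight σ φ A := by
  obtain ⟨m, hm, h⟩ := sheight_of_mem σ (φ := φ) hA h0
  rw [h]
  have hpi := Real.pi_pos
  exact mul_nonneg hm.le (Real.sin_nonneg_of_nonneg_of_le_pi
    (mul_nonneg hpi.le (by linarith)) (by nlinarith))

lemma sheight_pos_of_mem {φ ψ : ℝ} {A : D} (hA : A ∈ σ.P ψ) (h0 : ¬ IsZero A)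
    (h1 : φ < ψ) (h2 : ψ < φ + 1) : 0 < sheight σ φ A := by
  obtain ⟨m, hm, h⟩ := sheight_of_mem σ (φ := φ) hA h0
  rw [h]
  have hpi := Real.pi_pos
  exact mul_pos hm (Real.sin_pos_of_pos_of_lt_pi
    (mul_pos hpi (by linarith)) (by nlinarith))

lemma Filt.sheight_nonneg
    (hBext : ∀ T ∈ distTriang D, T.obj₁ ∈ B → T.obj₃ ∈ B → Triangle.obj₂ T ∈ B)
    {φ hi lo : ℝ} {X : D} (h : Filt σ.P hi lo X) (h1 : φ ≤ lo) (h2 : hi ≤ φ + 1) :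
    0 ≤ sheight σ φ X := by
  induction h with
  | single A hA h0 => exact sheight_nonneg_of_mem σ hA h0 h1 h2
  | ext lo ψ' X Y A a b c hX hT hA h0 hlt ih =>
    have e := sheight_add σ (φ := φ) hT (hX.mem σ hBext)
      (hBext _ hT (hX.mem σ hBext) (σ.P_le _ hA)) (σ.P_le _ hA)
    have e1 : sheight σ φ Y = sheight σ φ X + sheight σ φ A := e
    have := hX.le
    have h3 := sheight_nonneg_of_mem σ hA h0 h1 (by linarith)
    have h4 := ih (by linarith)
    linarith

lemma Filt.mem_of_sheight
    (hBext : ∀ T ∈ distTriang D, T.obj₁ ∈ B → T.obj₃ ∈ B → Triangle.obj₂ T ∈ B)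
    {φ hi lo : ℝ} {X : D} (h : Filt σ.P hi lo X) (h1 : φ < lo) (h2 : hi ≤ φ + 1)
    (h3 : sheight σ φ X = 0) : X ∈ σ.P (φ + 1) := by
  cases h with
  | single _ hA h0 =>
    rcases h2.lt_or_eq with h | h
    · exact absurd h3 (sheight_pos_of_mem σ hA h0 h1 h).ne'
    · rw [← h]; exact hA
  | ext lo _ X' _ A a b c hX hT hA h0 hlt =>
    exfalso
    have e := sheight_add σ (φ := φ) hT (hX.mem σ hBext)
      (hBext _ hT (hX.mem σ hBext) (σ.P_le _ hA)) (σ.P_le _ hA)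
    have e1 : sheight σ φ X = sheight σ φ X' + sheight σ φ A := e
    have := hX.le
    have h4 := sheight_pos_of_mem σ hA h0 h1 (by linarith)
    have h5 := hX.sheight_nonneg σ hBext (φ := φ) (by linarith) h2
    linarith

lemma Filt.le_lo {T : Triangle D} (hT : T ∈ distTriang D) {hi lo φ a c : ℝ}
    (h : Filt σ.P hi lo (Triangle.obj₂ T)) (h1 : T.obj₁ ∈ σ.P a) (h3 : T.obj₃ ∈ σ.P c)
    (ha : φ ≤ a) (hc : φ ≤ c) : φ ≤ lo := by
  by_contra! hlt
  obtain ⟨A, hA, f, hf⟩ := h.nonzero_hom_to σ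
  obtain ⟨g, hg⟩ := Triangle.yoneda_exact₂ _ hT f (σ.s2 _ _ (by linarith) _ h1 _ hA _)
  have : g = 0 := σ.s2 _ _ (by linarith) _ h3 _ hA g
  exact hf (by rw [hg, this, comp_zero])

lemma Filt.hi_le {T : Triangle D} (hT : T ∈ distTriang D) {hi lo φ a c : ℝ}
    (h : Filt σ.P hi lo (Triangle.obj₂ T)) (h1 : T.obj₁ ∈ σ.P a) (h3 : T.obj₃ ∈ σ.P c)
    (ha : a ≤ φ) (hc : c ≤ φ) : hi ≤ φ := by
  by_contra! hlt
  obtain ⟨A, hA, f, hf⟩ := h.nonzero_hom_from σ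
  obtain ⟨g, hg⟩ := Triangle.coyoneda_exact₂ _ hT f (σ.s2 _ _ (by linarith) _ hA _ h3 _)
  have : g = 0 := σ.s2 _ _ (by linarith) _ hA _ h1 g
  exact hf (by rw [hg, this, zero_comp])

/-- Endomorphisms of stable objects are zero or invertible. -/
lemma stable_end [IsTriangulated D]
    (hBext : ∀ T ∈ distTriang D, T.obj₁ ∈ B → T.obj₃ ∈ B → Triangle.obj₂ T ∈ B)
    (hBcone : ∀ T ∈ distTriang D, T.obj₁ ∈ B → Triangle.obj₂ T ∈ B → T.obj₃ ∈ B)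
    {φ : ℝ} {E : D} (hE : σ.IsStable φ E) (f : E ⟶ E) : f = 0 ∨ IsIso f := by
  obtain ⟨⟨hEP, hE0⟩, hst⟩ := hE
  have hEB := σ.P_le _ hEP
  obtain ⟨C, g, h, hT⟩ := distinguished_cocone_triangle f
  by_cases hC : IsZero C
  · exact Or.inr ((Triangle.isZero₃_iff_isIso₁ _ hT).1 hC)
  left
  have hCB : C ∈ B := hBcone _ hT hEB hEB
  have hZC : σ.Z C = 0 := by
    have e : σ.Z E = σ.Z E + σ.Z C := σ.Z_add _ hT hEB hEB hCB
    linear_combination -e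
  obtain ⟨hi, lo, hF⟩ := exists_filt σ hCB hC
  have hlo : φ ≤ lo := Filt.le_lo σ (rot_of_distTriang _ hT) (φ := φ) (a := φ) (c := φ + 1)
    hF hEP (P_shift_one σ hEP) le_rfl (by linarith)
  have hhi : hi ≤ φ + 1 := Filt.hi_le σ (rot_of_distTriang _ hT) (φ := φ + 1) (a := φ)
    (c := φ + 1) hF hEP (P_shift_one σ hEP) (by linarith) le_rfl
  have hsC : sheight σ φ C = 0 := by simp [sheight, hZC]
  cases hF with
  | single _ hA h0 =>
    obtain ⟨m, hm, hZ⟩ := σ.s1 _ _ hA h0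
    rw [hZC] at hZ
    have := hZ.symm
    simp [hm.ne'] at this
  | ext lo' _ X _ Q a b c hX hT' hQ hQ0 hlt =>
    have hXB := hX.mem σ hBext
    have e : sheight σ φ C = sheight σ φ X + sheight σ φ Q :=
      sheight_add σ hT' hXB hCB (σ.P_le _ hQ)
    have hle := hX.le
    have h4 := sheight_nonneg_of_mem σ hQ hQ0 hlo (by linarith)
    have h5 := hX.sheight_nonneg σ hBext (φ := φ) (by linarith) hhi
    have hlo' : lo = φ := by
      by_contra hne
      have := sheight_pos_of_mem σ hQ hQ0 (lt_of_le_of_ne hlo (Ne.symm hne)) (by linarith)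
      linarith
    subst hlo'
    have hXP : X ∈ σ.P (lo + 1) := hX.mem_of_sheight σ hBext hlt hhi (by linarith)
    obtain ⟨I, i, k, hI⟩ := distinguished_cocone_triangle₁ (g ≫ b)
    let o := Triangulated.someOctahedron' rfl hT hT' hI
    have hIB : I ∈ B := hBext _ o.mem hEB hXB
    have hIP : I ∈ σ.P lo := by
      by_cases hI0 : IsZero I
      · exact σ.P_zero _ _ hI0
      obtain ⟨hi', lo', hF⟩ := exists_filt σ hIB hI0
      have h6 : lo ≤ lo' := Filt.le_lo σ o.mem (φ := lo) (a := lo) (c := lo + 1)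
        hF hEP hXP le_rfl (by linarith)
      have h7 : hi' ≤ lo := Filt.hi_le σ (inv_rot_of_distTriang _ hI) (φ := lo) (a := lo - 1)
        (c := lo) hF (P_shift_neg_one' σ hQ) hEP (by linarith) le_rfl
      cases hF with
      | single _ hA h0 =>
        rw [le_antisymm h6 h7]
        exact hA
      | ext lo'' _ X _ Q a b c hX hT' hQ hQ0 hlt =>
        have := hX.le
        exfalso; linarith
    rcases hst _ _ _ _ _ hI hIP hQ with h8 | h8
    · rw [← o.comm₁, h8.eq_of_tgt o.m₁ 0, zero_comp]
    · exact (hQ0 h8).elim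

lemma stable_neg {φ : ℝ} {E : D} (hE : σ.IsStable φ E) (n : ℤ) (hn : n < 0)
    (f : E ⟶ E⟦n⟧) : f = 0 := by
  obtain ⟨k, rfl⟩ : ∃ k : ℕ, n = -(k : ℤ) := ⟨n.natAbs, by omega⟩
  have hk : (0 : ℝ) < k := by
    have : 0 < k := by omega
    exact_mod_cast this
  exact σ.s2 _ _ (by linarith) _ hE.1.1 _ (P_shift_neg_nat σ hE.1.1 k) f

/-- An object whose endomorphisms are zero or invertible is indecomposable. -/
lemma indec_of_end {E : D} (hend : ∀ f : E ⟶ E, f = 0 ∨ IsIso f)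
    (X Y : D) (b : BinaryBicone X Y) (e : E ≅ b.pt) : IsZero X ∨ IsZero Y := by
  rcases hend (e.hom ≫ b.fst ≫ b.inl ≫ e.inv) with h | h
  · left
    rw [IsZero.iff_id_eq_zero]
    have := b.inl ≫= (e.inv ≫= (h =≫ (e.hom ≫ b.fst)))
    simpa using this
  · right
    rw [IsZero.iff_id_eq_zero]
    have : (b.inr ≫ e.inv) ≫ (e.hom ≫ b.fst ≫ b.inl ≫ e.inv) = 0 := by simp
    have h2 : b.inr ≫ e.inv = 0 := by
      rw [← cancel_mono (e.hom ≫ b.fst ≫ b.inl ≫ e.inv), this, zero_comp]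
    have h3 := h2 =≫ (e.hom ≫ b.snd)
    simpa using h3

end StabAux2

section TruncAux

open CategoryTheory.Triangulated

variable {D : Type*} [Category D] [HasZeroObject D] [Preadditive D] [HasShift D ℤ]
  [∀ n : ℤ, (CategoryTheory.shiftFunctor D n).Additive] [Pretriangulated D]

/-- All morphisms from `A` to shifts of `B` vanish. -/
def Orth (A B : D) : Prop := ∀ (p : ℤ) (f : A ⟶ B⟦p⟧), f = 0

lemma coyoneda_shift {X Y Z : D} {f : X ⟶ Y} {g : Y ⟶ Z} {h : Z ⟶ X⟦(1 : ℤ)⟧}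
    (hT : Triangle.mk f g h ∈ distTriang D) (n : ℤ) {A : D} (x : A ⟶ Y⟦n⟧)
    (hx : x ≫ g⟦n⟧' = 0) : ∃ y : A ⟶ X⟦n⟧, x = y ≫ f⟦n⟧' := by
  have hT' := Triangle.shift_distinguished _ hT n
  obtain ⟨y, hy⟩ := Triangle.coyoneda_exact₂ _ hT' x (by
    change x ≫ (n.negOnePow • g⟦n⟧') = 0
    rw [Units.smul_def, Preadditive.comp_zsmul, hx, smul_zero])
  change A ⟶ X⟦n⟧ at y
  change x = y ≫ (n.negOnePow • f⟦n⟧') at hy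
  refine ⟨(n.negOnePow : ℤ) • y, ?_⟩
  rw [hy, Units.smul_def, Preadditive.comp_zsmul, Preadditive.zsmul_comp]

lemma exists_inv_rot {X Y Z : D} {f : X ⟶ Y} {g : Y ⟶ Z} {h : Z ⟶ X⟦(1 : ℤ)⟧}
    (hT : Triangle.mk f g h ∈ distTriang D) :
    ∃ (u : Z⟦(-1 : ℤ)⟧ ⟶ X) (v : Y ⟶ Z⟦(-1 : ℤ)⟧⟦(1 : ℤ)⟧),
      Triangle.mk u f v ∈ distTriang D :=
  ⟨_, _, inv_rot_of_distTriang _ hT⟩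

lemma Orth.shift_right {A B : D} (h : Orth A B) (a : ℤ) : Orth A (B⟦a⟧) := by
  intro p f
  have := h (a + p) (f ≫ ((shiftFunctorAdd' D a p (a + p) rfl).app B).inv)
  rwa [Iso.comp_inv_eq, zero_comp] at this

lemma Orth.shift_neg_one_left {A B : D} (h : Orth A B) : Orth (A⟦(-1 : ℤ)⟧) B := by
  intro p f
  have h1 := h.shift_right p 1 ((shiftNegShift A (1 : ℤ)).inv ≫ f⟦(1 : ℤ)⟧')
  have h2 : f⟦(1 : ℤ)⟧' = 0 := by
    rw [← cancel_epi (shiftNegShift A (1 : ℤ)).inv, h1, comp_zero]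
  exact (shiftFunctor D (1 : ℤ)).map_injective (by rw [h2, Functor.map_zero])

lemma Orth.right_mid {X Y Z : D} {f : X ⟶ Y} {g : Y ⟶ Z} {h : Z ⟶ X⟦(1 : ℤ)⟧}
    (hT : Triangle.mk f g h ∈ distTriang D) {A : D} (hX : Orth A X) (hZ : Orth A Z) :
    Orth A Y := by
  intro p x
  obtain ⟨y, hy⟩ := coyoneda_shift hT p x (hZ _ _)
  rw [hy, hX _ y, zero_comp]

lemma Orth.right_third {X Y Z : D} {f : X ⟶ Y} {g : Y ⟶ Z} {h : Z ⟶ X⟦(1 : ℤ)⟧}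
    (hT : Triangle.mk f g h ∈ distTriang D) {A : D} (hX : Orth A X) (hY : Orth A Y) :
    Orth A Z :=
  Orth.right_mid (rot_of_distTriang _ hT) hY (hX.shift_right 1)

lemma Orth.left_mid {X Y Z : D} {f : X ⟶ Y} {g : Y ⟶ Z} {h : Z ⟶ X⟦(1 : ℤ)⟧}
    (hT : Triangle.mk f g h ∈ distTriang D) {A : D} (hX : Orth X A) (hZ : Orth Z A) :
    Orth Y A := by
  intro p x
  obtain ⟨y, hy⟩ := Triangle.yoneda_exact₂ _ hT x (hX _ _)
  change Z ⟶ A⟦p⟧ at y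
  change x = g ≫ y at hy
  rw [hy, hZ _ y, comp_zero]

/-- Truncations and cohomology objects of an object with respect to a t-structure. -/
structure TruncData (t : TStructure D) (E : D) where
  L : ℤ → D
  G : ℤ → D
  X : ℤ → D
  ι : ∀ m, L m ⟶ E
  π : ∀ m, E ⟶ G m
  δ : ∀ m, G m ⟶ (L m)⟦(1 : ℤ)⟧
  tri : ∀ m, Triangle.mk (ι m) (π m) (δ m) ∈ distTriang D
  l : ∀ m, L m ⟶ L (m + 1)
  q : ∀ m, L (m + 1) ⟶ X m
  r : ∀ m, X m ⟶ (L m)⟦(1 : ℤ)⟧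
  triL : ∀ m, Triangle.mk (l m) (q m) (r m) ∈ distTriang D
  k : ∀ m, X m ⟶ G m
  g : ∀ m, G m ⟶ G (m + 1)
  s : ∀ m, G (m + 1) ⟶ (X m)⟦(1 : ℤ)⟧
  triG : ∀ m, Triangle.mk (k m) (g m) (s m) ∈ distTriang D
  comm : ∀ m, q m ≫ k m = ι (m + 1) ≫ π m
  leL : ∀ m, t.IsLE (L m) (m - 1)
  geG : ∀ m, t.IsGE (G m) m
  leX : ∀ m, t.IsLE (X m) m
  geX : ∀ m, t.IsGE (X m) m
  L_zero : ∀ a m, t.IsGE E a → m ≤ a → IsZero (L m)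
  G_zero : ∀ b m, t.IsLE E b → b < m → IsZero (G m)

lemma exists_truncData [IsTriangulated D] (t : TStructure D) (E : D) :
    Nonempty (TruncData t E) := by
  have key : ∀ m : ℤ, ∃ (X : D) (q : (t.truncLT (m + 1)).obj E ⟶ X)
      (r : X ⟶ ((t.truncLT m).obj E)⟦(1 : ℤ)⟧)
      (k : X ⟶ (t.truncGE m).obj E) (g : (t.truncGE m).obj E ⟶ (t.truncGE (m + 1)).obj E)
      (s : (t.truncGE (m + 1)).obj E ⟶ X⟦(1 : ℤ)⟧),
      Triangle.mk ((t.natTransTruncLTOfLE m (m + 1) (by omega)).app E) q r ∈ distTriang D ∧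
      Triangle.mk k g s ∈ distTriang D ∧
      q ≫ k = (t.truncLTι (m + 1)).app E ≫ (t.truncGEπ m).app E ∧
      t.IsLE X m ∧ t.IsGE X m := by
    intro m
    obtain ⟨X, q, r, hT⟩ := distinguished_cocone_triangle
      ((t.natTransTruncLTOfLE m (m + 1) (by omega)).app E)
    have h1 : Triangle.mk ((t.truncLTι m).app E) ((t.truncGEπ m).app E)
      ((t.truncGEδLT m).app E) ∈ distTriang D := t.triangleLTGE_distinguished m E
    have h2 : Triangle.mk ((t.truncLTι (m + 1)).app E) ((t.truncGEπ (m + 1)).app E)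
      ((t.truncGEδLT (m + 1)).app E) ∈ distTriang D := t.triangleLTGE_distinguished (m + 1) E
    let o := Triangulated.someOctahedron
      (t.natTransTruncLTOfLE_ι_app m (m + 1) (by omega) E) hT h2 h1
    refine ⟨X, q, r, o.m₁, o.m₃, _, hT, o.mem, o.comm₁, ?_, ?_⟩
    · have h3 : t.IsLE ((t.truncLT m).obj E) (m + 1) := t.isLE_truncLT_obj E m (m + 1)
      have h4 : t.IsLE (((t.truncLT m).obj E)⟦(1 : ℤ)⟧) m := t.isLE_shift _ (m + 1) 1 m
      exact t.isLE₂ _ (rot_of_distTriang _ hT) m (t.isLE_truncLT_obj E (m + 1) m) h4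
    · have h3 : t.IsGE ((t.truncGE (m + 1)).obj E) (m - 1) :=
        t.isGE_truncGE_obj E (m + 1) (m - 1)
      have h4 : t.IsGE (((t.truncGE (m + 1)).obj E)⟦(-1 : ℤ)⟧) m :=
        t.isGE_shift _ (m - 1) (-1) m
      exact t.isGE₂ _ (inv_rot_of_distTriang _ o.mem) m h4
        (t.isGE_truncGE_obj E m m)
  choose X q r k g s h1 h2 h3 h4 h5 using key
  exact ⟨{
    L := fun m => (t.truncLT m).obj E
    G := fun m => (t.truncGE m).obj E
    X := X
    ι := fun m => (t.truncLTι m).app E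
    π := fun m => (t.truncGEπ m).app E
    δ := fun m => (t.truncGEδLT m).app E
    tri := fun m => t.triangleLTGE_distinguished m E
    l := _
    q := q
    r := r
    triL := h1
    k := k
    g := g
    s := s
    triG := h2
    comm := h3
    leL := fun m => inferInstance
    geG := fun m => inferInstance
    leX := h4
    geX := h5
    L_zero := fun a m ha hm => by
      have := t.isGE_of_ge E m a hm
      exact t.isZero_truncLT_obj_of_isGE m E
    G_zero := fun b m hb hm => by
      have := t.isLE_of_le E b (m - 1) (by omega)
      exact t.isZero_truncGE_obj_of_isLE (m - 1) m (by omega) E }⟩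

variable {t : TStructure D} {E : D} (d : TruncData t E)

/-- The key vanishing: extensions between cohomology objects would give forbidden
endomorphisms of `E`. -/
lemma TruncData.hom_eq_zero (hneg : ∀ n : ℤ, n < 0 → ∀ f : E ⟶ E⟦n⟧, f = 0)
    (hsq : ∀ f : E ⟶ E, f ≫ f = 0 → f = 0) {i j : ℤ} (hij : i + 1 ≤ j)
    (h1 : Orth (d.G (j + 1)) (d.X i)) (h2 : Orth (d.G j) (d.L i))
    (n : ℤ) (hn1 : i - j ≤ n) (hn2 : n ≤ i - j + 1) (α : d.X j ⟶ (d.X i)⟦n⟧) : α = 0 := by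
  obtain ⟨u, v, hu⟩ := exists_inv_rot (d.triG j)
  obtain ⟨α', hα'⟩ := Triangle.yoneda_exact₂ _ hu α (h1.shift_neg_one_left _ _)
  change d.G j ⟶ (d.X i)⟦n⟧ at α'
  change α = d.k j ≫ α' at hα'
  obtain ⟨β, hβ⟩ := coyoneda_shift (rot_of_distTriang _ (d.triL i)) n α'
    (h2.shift_right 1 _ _)
  change d.G j ⟶ (d.L (i + 1))⟦n⟧ at β
  change α' = β ≫ (d.q i)⟦n⟧' at hβ
  have hγ : d.π j ≫ β ≫ (d.ι (i + 1))⟦n⟧' = 0 := by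
    rcases lt_or_eq_of_le (show n ≤ 0 by omega) with hn | hn
    · exact hneg n hn _
    · have hj : j = i + 1 := by omega
      subst hn
      subst hj
      have h0 := hsq (d.π (i + 1) ≫ β ≫ (shiftFunctorZero D ℤ).hom.app _ ≫ d.ι (i + 1)) (by
        have : d.ι (i + 1) ≫ d.π (i + 1) = 0 := comp_distTriang_mor_zero₁₂ _ (d.tri (i + 1))
        simp only [Category.assoc]
        rw [reassoc_of% this]
        simp)
      rw [← cancel_mono ((shiftFunctorZero D ℤ).hom.app E), zero_comp, ← h0]
      simp only [Category.assoc]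
      rw [(shiftFunctorZero D ℤ).hom.naturality]
      rfl
  have h3 : d.q j ≫ (α ≫ (d.k i)⟦n⟧') = 0 := by
    have := d.ι (j + 1) ≫= (hγ =≫ (d.π i)⟦n⟧')
    simp only [Category.assoc, zero_comp, comp_zero, ← Functor.map_comp, ← d.comm] at this
    rw [← reassoc_of% (d.comm j)] at this
    rw [hα', hβ]
    simpa using this
  have h4 : α ≫ (d.k i)⟦n⟧' = 0 := by
    obtain ⟨y, hy⟩ := Triangle.yoneda_exact₃ _ (d.triL j) (α ≫ (d.k i)⟦n⟧') h3
    change (d.L j)⟦(1 : ℤ)⟧ ⟶ (d.G i)⟦n⟧ at y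
    change α ≫ (d.k i)⟦n⟧' = d.r j ≫ y at hy
    have := d.leL j
    have := d.geG i
    have h5 : t.IsLE ((d.L j)⟦(1 : ℤ)⟧) (j - 2) := t.isLE_shift _ (j - 1) 1 (j - 2)
    have h6 : t.IsGE ((d.G i)⟦n⟧) (i - n) := t.isGE_shift _ i n (i - n)
    have hy0 : y = 0 := t.zero_of_isLE_of_isGE y (j - 2) (i - n) (by omega) h5 h6
    rw [hy, hy0, comp_zero]
  obtain ⟨u', v', hu'⟩ := exists_inv_rot (d.triG i)
  obtain ⟨y, hy⟩ := coyoneda_shift hu' n α h4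
  have := d.geG (i + 1)
  have h5 : t.IsGE ((d.G (i + 1))⟦(-1 : ℤ)⟧) (i + 2) := t.isGE_shift _ (i + 1) (-1) (i + 2)
  have h6 : t.IsGE ((d.G (i + 1))⟦(-1 : ℤ)⟧⟦n⟧) (i + 2 - n) := t.isGE_shift _ (i + 2) n _
  rw [hy, t.zero_of_isLE_of_isGE y j (i + 2 - n) (by omega) (d.leX j) h6, zero_comp]

lemma TruncData.orth (hneg : ∀ n : ℤ, n < 0 → ∀ f : E ⟶ E⟦n⟧, f = 0)
    (hsq : ∀ f : E ⟶ E, f ≫ f = 0 → f = 0)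
    (hAH : ∀ i j : ℤ, (∀ α : d.X j ⟶ (d.X i)⟦i - j⟧, α = 0) →
      (∀ α : d.X j ⟶ (d.X i)⟦i - j + 1⟧, α = 0) → Orth (d.X j) (d.X i))
    {a b : ℤ} (ha : t.IsGE E a) (hb : t.IsLE E b) (N : ℕ) :
    ∀ i j : ℤ, i ≤ j → b - a - (j - i) ≤ N → Orth (d.G j) (d.L i) := by
  induction N with
  | zero =>
    intro i j hij hN p f
    by_cases hj : b < j
    · exact (d.G_zero b j hb hj).eq_of_src _ _
    · exact ((shiftFunctor D p).map_isZero (d.L_zero a i ha (by omega))).eq_of_tgt _ _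
  | succ N ih =>
    intro i' j hij hN
    obtain ⟨i, rfl⟩ : ∃ i, i' = i + 1 := ⟨i' - 1, by omega⟩
    push_cast at hN
    have w1 := ih (i + 1) (j + 1) (by omega) (by omega)
    have w2 := ih i j (by omega) (by omega)
    have w3 := ih i (j + 1) (by omega) (by omega)
    have h1 : Orth (d.G (j + 1)) (d.X i) := Orth.right_third (d.triL i) w3 w1
    have h2 : Orth (d.X j) (d.X i) := hAH i j
      (fun α => d.hom_eq_zero hneg hsq hij h1 w2 _ (by omega) (by omega) α)
      (fun α => d.hom_eq_zero hneg hsq hij h1 w2 _ (by omega) (by omega) α)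
    exact Orth.right_mid (d.triL i) w2 (Orth.left_mid (d.triG j) h2 h1)

lemma exists_pure {t : TStructure D} {E : D} {a : ℤ} (k : ℕ) (ha : t.IsGE E a)
    (hb : t.IsLE E (a + k))
    (h : ∀ m, t.IsLE E (m - 1) ∨ t.IsGE E m) : ∃ m, t.IsGE E m ∧ t.IsLE E m := by
  induction k generalizing a with
  | zero => exact ⟨a, ha, by simpa using hb⟩
  | succ k ih =>
    rcases h (a + 1) with h1 | h1
    · exact ⟨a, ha, by simpa using h1⟩
    · exact ih h1 (by convert hb using 1; push_cast; ring)

lemma TruncData.pure (hneg : ∀ n : ℤ, n < 0 → ∀ f : E ⟶ E⟦n⟧, f = 0)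
    (hend : ∀ f : E ⟶ E, f = 0 ∨ IsIso f)
    (hAH : ∀ i j : ℤ, (∀ α : d.X j ⟶ (d.X i)⟦i - j⟧, α = 0) →
      (∀ α : d.X j ⟶ (d.X i)⟦i - j + 1⟧, α = 0) → Orth (d.X j) (d.X i))
    {a b : ℤ} (ha : t.IsGE E a) (hb : t.IsLE E b) : ∃ m, t.IsGE E m ∧ t.IsLE E m := by
  have hsq : ∀ f : E ⟶ E, f ≫ f = 0 → f = 0 := by
    intro f hf
    rcases hend f with h | h
    · exact h
    · rw [← cancel_mono f, hf, zero_comp]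
  have hle : t.IsLE E (a + (b - a).toNat) := t.isLE_of_le E b _ (by omega)
  refine exists_pure (b - a).toNat ha hle (fun m => ?_)
  have hO := d.orth hneg hsq hAH ha hb (b - a).toNat m m le_rfl (by omega)
  obtain ⟨s, hs⟩ := Triangle.coyoneda_exact₃ _ (d.tri m) (𝟙 (d.G m)) (hO 1 _)
  change d.G m ⟶ E at s
  change 𝟙 (d.G m) = s ≫ d.π m at hs
  rcases hend (d.π m ≫ s) with h | h
  · left
    have h0 : IsZero (d.G m) := by
      rw [IsZero.iff_id_eq_zero]
      have h1 : s ≫ (d.π m ≫ s) ≫ d.π m = 𝟙 _ := by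
        simp only [Category.assoc]
        rw [← hs, Category.comp_id, ← hs]
      rw [← h1, h, zero_comp, comp_zero]
    have : IsIso (d.ι m) := (Triangle.isZero₃_iff_isIso₁ _ (d.tri m)).1 h0
    have := d.leL m
    exact t.isLE_of_iso (asIso (d.ι m)) (m - 1)
  · right
    have h1 : IsIso (d.π m) := by
      have h2 : Mono (d.π m) := mono_of_mono (d.π m) s
      have h3 : IsSplitEpi (d.π m) := ⟨⟨⟨s, hs.symm⟩⟩⟩
      exact isIso_of_mono_of_isSplitEpi _
    have := d.geG m
    exact t.isGE_of_iso (asIso (d.π m)).symm m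

end TruncAux

section LinearAux

open CategoryTheory.Triangulated

variable {D : Type*} [Category D] [HasZeroObject D] [Preadditive D] [HasShift D ℤ]
  [∀ n : ℤ, (CategoryTheory.shiftFunctor D n).Additive] [Pretriangulated D]

lemma hom_zero_transport {X Y A B : D} {s r p q : ℤ} (e₁ : X ≅ A⟦s⟧) (e₂ : Y ≅ B⟦r⟧)
    (hpq : p + r = s + q) (h : ∀ f : A ⟶ B⟦q⟧, f = 0) (f : X ⟶ Y⟦p⟧) : f = 0 := by
  let e₃ : Y⟦p⟧ ≅ B⟦q⟧⟦s⟧ := (shiftFunctor D p).mapIso e₂ ≪≫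
    ((shiftFunctorAdd' D r p (r + p) rfl).app B).symm ≪≫
    (shiftFunctorAdd' D q s (r + p) (by omega)).app B
  obtain ⟨g, hg⟩ := (shiftFunctor D s).map_surjective (e₁.inv ≫ f ≫ e₃.hom)
  rw [h g, Functor.map_zero] at hg
  rw [← cancel_epi e₁.inv, ← cancel_mono e₃.hom, Category.assoc, ← hg]
  simp

lemma smul_id_iso {R : Type*} [Ring R] {C : Type*} [Category C] [Preadditive C] [Linear R C]
    {X Y : C} (e : X ≅ Y) (a : R) (h : a • 𝟙 X = 0) : a • 𝟙 Y = 0 := by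
  have : a • 𝟙 Y = e.inv ≫ (a • 𝟙 X) ≫ e.hom := by simp
  rw [this, h]; simp

lemma TruncData.smul_id_X {R : Type*} [Ring R] [Linear R D] {t : TStructure D} {E : D}
    (d : TruncData t E) (a : R) (ha : a • 𝟙 E = 0) (m : ℤ) : a • 𝟙 (d.X m) = 0 := by
  have hL : ∀ m, a • 𝟙 (d.L m) = 0 := by
    intro m
    obtain ⟨u, v, hT⟩ := exists_inv_rot (d.tri m)
    obtain ⟨y, hy⟩ := Triangle.coyoneda_exact₂ _ hT (a • 𝟙 (d.L m)) (by
      change (a • 𝟙 (d.L m)) ≫ d.ι m = 0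
      have : (a • 𝟙 (d.L m)) ≫ d.ι m = d.ι m ≫ (a • 𝟙 E) := by simp
      rw [this, ha, comp_zero])
    change d.L m ⟶ (d.G m)⟦(-1 : ℤ)⟧ at y
    change a • 𝟙 (d.L m) = y ≫ u at hy
    have := d.leL m
    have := d.geG m
    have : t.IsGE ((d.G m)⟦(-1 : ℤ)⟧) (m + 1) := t.isGE_shift _ m (-1) (m + 1)
    rw [hy, t.zero y (m - 1) (m + 1) (by omega), zero_comp]
  obtain ⟨y, hy⟩ := Triangle.yoneda_exact₃ _ (d.triL m) (a • 𝟙 (d.X m)) (by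
    change d.q m ≫ (a • 𝟙 (d.X m)) = 0
    have : d.q m ≫ (a • 𝟙 (d.X m)) = (a • 𝟙 (d.L (m + 1))) ≫ d.q m := by simp
    rw [this, hL, zero_comp])
  change (d.L m)⟦(1 : ℤ)⟧ ⟶ d.X m at y
  change a • 𝟙 (d.X m) = d.r m ≫ y at hy
  have := d.leL m
  have := d.geX m
  have : t.IsLE ((d.L m)⟦(1 : ℤ)⟧) (m - 2) := t.isLE_shift _ (m - 1) 1 (m - 2)
  rw [hy, t.zero y (m - 2) m (by omega), comp_zero]

lemma smul_id_eq_zero {R : Type*} [CommRing R] [Linear R D] {E : D}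
    (hend : ∀ f : E ⟶ E, f = 0 ∨ IsIso f) (a : R) (ha : IsNilpotent a) : a • 𝟙 E = 0 := by
  obtain ⟨k, hk⟩ := ha
  have key : ∀ b : R, (b • 𝟙 E = 0) ∨ IsIso (b • 𝟙 E) := fun b => hend _
  have hz : a ^ k • 𝟙 E = 0 := by rw [hk, zero_smul]
  clear hk
  induction k with
  | zero =>
    rw [pow_zero, one_smul] at hz
    rw [hz, smul_zero]
  | succ k ih =>
    rcases key a with h | h
    · exact h
    · apply ih
      rw [← cancel_mono (a • 𝟙 E), zero_comp, ← hz]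
      simp [smul_smul, pow_succ, mul_comm]

end LinearAux

section DerivedAux

variable {𝒜 : Type u} [Category.{v} 𝒜] [Abelian 𝒜] [HasDerivedCategory.{w} 𝒜]

open DerivedCategory.TStructure

lemma bounded_iff (E : DerivedCategory 𝒜) :
    IsBoundedComplex 𝒜 E ↔ ∃ a b : ℤ, t.IsGE E a ∧ t.IsLE E b := by
  constructor
  · rintro ⟨a, b, h⟩
    exact ⟨a, b, (DerivedCategory.isGE_iff E a).2 (fun i hi => h i (Or.inl hi)),
      (DerivedCategory.isLE_iff E b).2 (fun i hi => h i (Or.inr hi))⟩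
  · rintro ⟨a, b, h₁, h₂⟩
    refine ⟨a, b, fun i hi => ?_⟩
    rcases hi with hi | hi
    · exact (DerivedCategory.isGE_iff E a).1 h₁ i hi
    · exact (DerivedCategory.isLE_iff E b).1 h₂ i hi

lemma bounded_ext (T : Triangle (DerivedCategory 𝒜)) (hT : T ∈ distTriang (DerivedCategory 𝒜))
    (h₁ : IsBoundedComplex 𝒜 T.obj₁) (h₃ : IsBoundedComplex 𝒜 T.obj₃) :
    IsBoundedComplex 𝒜 (Triangle.obj₂ T) := by
  rw [bounded_iff] at *
  obtain ⟨a, b, h1, h2⟩ := h₁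
  obtain ⟨a', b', h1', h2'⟩ := h₃
  exact ⟨min a a', max b b',
    t.isGE₂ T hT _ (t.isGE_of_ge _ _ a (min_le_left _ _)) (t.isGE_of_ge _ _ a' (min_le_right _ _)),
    t.isLE₂ T hT _ (t.isLE_of_le _ b _ (le_max_left _ _)) (t.isLE_of_le _ b' _ (le_max_right _ _))⟩

lemma bounded_cone (T : Triangle (DerivedCategory 𝒜)) (hT : T ∈ distTriang (DerivedCategory 𝒜))
    (h₁ : IsBoundedComplex 𝒜 T.obj₁) (h₂ : IsBoundedComplex 𝒜 (Triangle.obj₂ T)) :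
    IsBoundedComplex 𝒜 T.obj₃ := by
  refine bounded_ext _ (rot_of_distTriang _ hT) h₂ ?_
  change IsBoundedComplex 𝒜 (T.obj₁⟦(1 : ℤ)⟧)
  rw [bounded_iff] at *
  obtain ⟨a, b, h1, h2⟩ := h₁
  exact ⟨a - 1, b - 1, t.isGE_shift _ a 1 (a - 1), t.isLE_shift _ b 1 (b - 1)⟩

lemma exists_degZero (X : DerivedCategory 𝒜) (n : ℤ) (h₁ : t.IsGE X n) (h₂ : t.IsLE X n) :
    ∃ A : 𝒜, Nonempty (X ≅ (degZero 𝒜 A)⟦-n⟧) := by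
  have : X.IsGE n := h₁
  have : X.IsLE n := h₂
  obtain ⟨A, ⟨e⟩⟩ := DerivedCategory.exists_iso_singleFunctor_obj_of_isGE_of_isLE X n
  exact ⟨A, ⟨e ≪≫ (((DerivedCategory.singleFunctors 𝒜).shiftIso (-n) n 0
    (by omega)).app A).symm⟩⟩

lemma annihilated {R : Type*} [Ring R] [CategoryTheory.Linear R 𝒜] {X : DerivedCategory 𝒜}
    {n : ℤ} {A : 𝒜} (e : X ≅ (degZero 𝒜 A)⟦n⟧) (a : R) (h : a • 𝟙 X = 0) : a • 𝟙 A = 0 := by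
  have h1 := smul_id_iso e a h
  apply (DerivedCategory.singleFunctor 𝒜 0).map_injective
  apply (shiftFunctor (DerivedCategory 𝒜) n).map_injective
  rw [Functor.map_smul, Functor.map_smul]
  simpa using h1

end DerivedAux

theorem stmt5 (R : Type*) [CommRing R] [IsArtinianRing R] [IsLocalRing R]
    {𝒜 : Type u} [Category.{v} 𝒜] [Abelian 𝒜] [CategoryTheory.Linear R 𝒜]
    [HasDerivedCategory.{w} 𝒜]
    -- the full subcategory `𝒜_𝔪` of objects annihilated by the maximal ideal `𝔪`
    (A𝔪 : Set 𝒜)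
    (hA𝔪 : A𝔪 = {A : 𝒜 | ∀ a ∈ IsLocalRing.maximalIdeal R, a • (𝟙 A) = 0})
    -- `𝒜_𝔪` is almost hereditary in `𝒜`
    (hAH : AlmostHereditary 𝒜 A𝔪)
    -- `σ` is a stability condition on `D^b(𝒜)`
    (σ : StabilityConditionOn {E : DerivedCategory 𝒜 | IsBoundedComplex 𝒜 E})
    -- `E` is a `σ`-stable object
    (E : DerivedCategory 𝒜) (φ : ℝ) (hE : σ.IsStable φ E) :
    -- `E` is indecomposable …
    (∀ (X Y : DerivedCategory 𝒜) (b : BinaryBicone X Y), b.IsBilimit →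
      Nonempty (E ≅ b.pt) → IsZero X ∨ IsZero Y) ∧
    -- … and `E` is, up to shift, an object of `𝒜_𝔪`
    (∃ A ∈ A𝔪, ∃ m : ℤ, Nonempty (E ≅ (degZero 𝒜 A)⟦m⟧)) := by
  have hend : ∀ f : E ⟶ E, f = 0 ∨ IsIso f :=
    fun f => stable_end σ bounded_ext bounded_cone hE f
  refine ⟨fun X Y b _ ⟨e⟩ => indec_of_end hend X Y b e, ?_⟩
  have hzero : ∀ a ∈ IsLocalRing.maximalIdeal R, a • 𝟙 E = 0 := by
    intro a ha
    apply smul_id_eq_zero hend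
    exact Ring.KrullDimLE.isNilpotent_iff_mem_maximalIdeal.2 ha
  obtain ⟨a, b, ha, hb⟩ := (bounded_iff E).1 (σ.P_le φ hE.1.1)
  obtain ⟨d⟩ := exists_truncData DerivedCategory.TStructure.t E
  have hX : ∀ m, ∃ A ∈ A𝔪, Nonempty (d.X m ≅ (degZero 𝒜 A)⟦-m⟧) := by
    intro m
    obtain ⟨A, ⟨e⟩⟩ := exists_degZero (d.X m) m (d.geX m) (d.leX m)
    refine ⟨A, ?_, ⟨e⟩⟩
    rw [hA𝔪]
    exact fun a ha => annihilated e a (d.smul_id_X a (hzero a ha) m)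
  choose A hA e using hX
  have e' : ∀ m, Nonempty (degZero 𝒜 (A m) ≅ (d.X m)⟦m⟧) := fun m =>
    ⟨(shiftNegShift (degZero 𝒜 (A m)) m).symm ≪≫
      (shiftFunctor (DerivedCategory 𝒜) m).mapIso (e m).some.symm⟩
  obtain ⟨m, h1, h2⟩ := d.pure (stable_neg σ hE) hend (by
    intro i j h0 h1 p f
    refine hom_zero_transport (e j).some (e i).some (q := p - i + j) (by omega) ?_ f
    refine hAH _ _ (hA j) (hA i) ?_ ?_ _
    · intro g
      have := hom_zero_transport (e' j).some (e' i).some (p := 0) (q := i - j) (by omega) h0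
        (g ≫ (shiftFunctorZero (DerivedCategory 𝒜) ℤ).inv.app _)
      rwa [← cancel_mono ((shiftFunctorZero (DerivedCategory 𝒜) ℤ).inv.app _), zero_comp]
    · exact hom_zero_transport (e' j).some (e' i).some (q := i - j + 1) (by omega) h1) ha hb
  obtain ⟨A', ⟨e₀⟩⟩ := exists_degZero E m h1 h2
  refine ⟨A', ?_, -m, ⟨e₀⟩⟩
  rw [hA𝔪]
  exact fun a ha => annihilated e₀ a (hzero a ha)
end
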